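/- arXiv:2102.07183 — 2 statements merged into one kernel-verified Lean document; each statement's English description precedes it below -/
import Mathlib

section
/- A group G of order 48 is a CI-group if and only if G is isomorphic to C_6 × C_2 × C_2 × C_2. -/
open Pointwise

/-- The Cayley graph `Cay(G, C)`: vertices are the elements of `G`, and distinct `g`, `h`
are adjacent iff `h * g⁻¹ ∈ C` (for a connection set `C`, i.e. `1 ∉ C` and `C⁻¹ = C`,
this relation is symmetric). -/
def cayleyGraph (G : Type*) [Group G] (C : Set G) : SimpleGraph G :=
  SimpleGraph.fromRel (fun g h => h * g⁻¹ ∈ C)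

/-- `G` is a CI-group: whenever two Cayley graphs of `G` (with connection sets `C`, `C'`)
are isomorphic, some automorphism of `G` maps `C` onto `C'`. -/
def IsCIGroup (G : Type*) [Group G] : Prop :=
  ∀ C C' : Set G, (1 : G) ∉ C → C⁻¹ = C → (1 : G) ∉ C' → C'⁻¹ = C' →
    Nonempty (cayleyGraph G C ≃g cayleyGraph G C') → ∃ σ : G ≃* G, ⇑σ '' C = C'


abbrev V4 := ZMod 2 × ZMod 2 × ZMod 2 × ZMod 2

lemma v4_two (x : V4) : x + x = 0 := by revert x; decide +kernel

/-- triangular maps depend on five bits -/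
def triF (a b1 b2 b3 b4 : ZMod 2) (x : V4) : V4 :=
  (x.1 + b1 * x.2.1 * x.2.2.1 + b2 * x.2.1 * x.2.2.2 + b3 * x.2.2.1 * x.2.2.2
    + b4 * x.2.1 * x.2.2.1 * x.2.2.2, x.2.1 + a * x.2.2.1 * x.2.2.2, x.2.2.1, x.2.2.2)

/-- unitriangular linear maps -/
def uniL (s u : ZMod 2) (t : V4) (x : V4) : V4 :=
  (x.1 + s * x.2.1 + t.1 * x.2.2.2, x.2.1 + t.2.1 * x.2.2.2, x.2.2.1 + u * x.2.2.2, x.2.2.2)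

lemma triF_check : ∀ a b1 b2 b3 b4 : ZMod 2, ∃ s : ZMod 2, ∃ t1 t2 : ZMod 2,
    ∀ d : V4, ∃ v : V4, triF a b1 b2 b3 b4 (v + d) - triF a b1 b2 b3 b4 v
      = uniL s 0 (t1, t2, 0, 0) d := by decide +kernel

def GoodPair (T : Subgroup (Equiv.Perm V4)) (f : V4 ≃ V4) (H H' : AddSubgroup V4) : Prop :=
  (∀ t ∈ T, ∀ x y, x - y ∈ H → t x - t y ∈ H) ∧ (∀ x y, x - y ∈ H ↔ f x - f y ∈ H')

/-- adjoining an element -/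
def adj2 (H : AddSubgroup V4) (z : V4) : AddSubgroup V4 where
  carrier := {x | x ∈ H ∨ x - z ∈ H}
  zero_mem' := Or.inl H.zero_mem
  add_mem' := by
    rintro a b (ha | ha) (hb | hb)
    · exact Or.inl (H.add_mem ha hb)
    · right; have := H.add_mem ha hb; convert this using 1; abel
    · right; have := H.add_mem ha hb; convert this using 1; abel
    · left; have := H.add_mem ha hb
      have e : a - z + (b - z) = a + b := by
        have := v4_two z
        rw [show a - z + (b - z) = a + b - (z + z) by abel, this, sub_zero]
      rwa [e] at this
  neg_mem' := by
    rintro a (ha | ha)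
    · exact Or.inl (H.neg_mem ha)
    · right
      have := H.neg_mem ha
      rwa [show -(a - z) = -a - z + (z + z) by abel, v4_two, add_zero] at this

lemma mem_adj2 {H : AddSubgroup V4} {z x : V4} : x ∈ adj2 H z ↔ x ∈ H ∨ x - z ∈ H := Iff.rfl

lemma card_adj2 (H : AddSubgroup V4) (z : V4) : Nat.card (adj2 H z) ≤ 2 * Nat.card H := by
  classical
  let φ : Bool × H → adj2 H z := fun p => if p.1 then ⟨p.2.1 + z, Or.inr (by simp)⟩
    else ⟨p.2.1, Or.inl p.2.2⟩
  have hs : Function.Surjective φ := by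
    rintro ⟨x, hx | hx⟩
    · exact ⟨(false, ⟨x, hx⟩), by simp [φ]⟩
    · exact ⟨(true, ⟨x - z, hx⟩), by simp [φ]⟩
  have := Nat.card_le_card_of_surjective φ hs
  simpa [Nat.card_prod] using this

lemma tri_step (T : Subgroup (Equiv.Perm V4)) (hT : IsPGroup 2 T)
    (hP : ∀ a : V4, Equiv.addRight a ∈ T) (f : V4 ≃ V4) (f0 : f 0 = 0)
    (hP' : ∀ a : V4, f.trans ((Equiv.addRight a).trans f.symm) ∈ T)
    (H H' : AddSubgroup V4) (hG : GoodPair T f H H') (hcard : Nat.card H < 16) :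
    ∃ z, z ∉ H ∧ GoodPair T f (adj2 H z) (adj2 H' (f z)) ∧
      (∀ x, f (x + z) - f x - f z ∈ H') ∧ Nat.card (adj2 H z) ≤ 2 * Nat.card H := by
  classical
  obtain ⟨hG1, hG2⟩ := hG
  let T0 : Subgroup (Equiv.Perm V4) :=
    { carrier := {t | t ∈ T ∧ t 0 ∈ H}
      one_mem' := ⟨T.one_mem, by simp⟩
      mul_mem' := by
        rintro a b ⟨ha, ha'⟩ ⟨hb, hb'⟩
        refine ⟨T.mul_mem ha hb, ?_⟩
        have := hG1 a ha (b 0) 0 (by simpa using hb')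
        simpa using H.add_mem this ha'
      inv_mem' := by
        rintro a ⟨ha, ha'⟩
        refine ⟨T.inv_mem ha, ?_⟩
        have := hG1 _ (T.inv_mem ha) (a 0) 0 (by simpa using ha')
        simpa using H.neg_mem this }
  have hT0 : IsPGroup 2 T0 := by
    refine hT.to_le (fun t ht => ht.1)
  have hq : ∀ (t : T0) (a b : V4), QuotientAddGroup.leftRel H a b →
      QuotientAddGroup.leftRel H (t.1 a) (t.1 b) := by
    intro t a b hab
    rw [QuotientAddGroup.leftRel_apply] at hab ⊢
    have := hG1 t.1 t.2.1 b a (by rwa [sub_eq_neg_add])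
    rwa [sub_eq_neg_add] at this
  let act : MulAction T0 (V4 ⧸ H) :=
    { smul := fun t => Quotient.map t.1 (fun a b h => hq t a b h)
      one_smul := by rintro ⟨x⟩; rfl
      mul_smul := by rintro a b ⟨x⟩; rfl }
  have hsm : ∀ (t : T0) (x : V4), t • (QuotientAddGroup.mk x : V4 ⧸ H) = QuotientAddGroup.mk (t.1 x) :=
    fun _ _ => rfl
  have h16 : Nat.card V4 = 2 ^ 4 := by simp [V4]
  have hdv : 2 ∣ Nat.card (V4 ⧸ H) := by
    have h1 : Nat.card (V4 ⧸ H) * Nat.card H = 2 ^ 4 := by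
      rw [← h16]; exact (AddSubgroup.card_eq_card_quotient_mul_card_addSubgroup H).symm
    obtain ⟨k, hk, hk'⟩ := (Nat.dvd_prime_pow Nat.prime_two).1 (Dvd.intro _ h1)
    rcases k with _ | k
    · rw [hk'] at h1; omega
    · rw [hk', pow_succ]; exact Dvd.intro_left _ rfl
  have hfix : (QuotientAddGroup.mk 0 : V4 ⧸ H) ∈ MulAction.fixedPoints T0 (V4 ⧸ H) := by
    intro t
    rw [hsm, QuotientAddGroup.eq]
    simpa using t.2.2
  obtain ⟨b, hb, hne⟩ := hT0.exists_fixed_point_of_prime_dvd_card_of_fixed_point _ hdv hfix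
  obtain ⟨z, rfl⟩ := QuotientAddGroup.mk_surjective b
  have hz : z ∉ H := by
    intro hz; apply hne; rw [QuotientAddGroup.eq]; simpa using hz
  have key : ∀ t ∈ T, ∀ x, t (x + z) - t x - z ∈ H := by
    intro t ht x
    have hm : Equiv.addRight (-(t x)) * t * Equiv.addRight x ∈ T :=
      T.mul_mem (T.mul_mem (hP _) ht) (hP _)
    have h1 := hb ⟨_, hm, by simp⟩
    rw [hsm, eq_comm, QuotientAddGroup.eq] at h1
    convert h1 using 1
    simp only [Equiv.Perm.coe_mul, Function.comp, Equiv.coe_addRight]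
    rw [add_comm z x]; abel
  have keyf : ∀ x, f (x + z) - f x - f z ∈ H' := by
    intro y
    have h1 := key _ (hP' (f y)) 0
    simp only [Equiv.coe_trans, Function.comp, Equiv.coe_addRight, f0, zero_add,
      Equiv.symm_apply_apply] at h1
    rw [sub_sub, hG2, Equiv.apply_symm_apply] at h1
    have := H'.neg_mem h1
    convert this using 1
    abel
  refine ⟨z, hz, ⟨?_, ?_⟩, keyf, card_adj2 H z⟩
  · rintro t ht x y (h | h)
    · exact Or.inl (hG1 t ht x y h)
    · right
      have h1 := hG1 t ht x (y + z) (by convert h using 1; abel)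
      have := H.add_mem h1 (key t ht y)
      convert this using 1; abel
  · intro x y
    rw [mem_adj2, mem_adj2, ← hG2, show x - y - z = x - (y + z) by abel, hG2 x (y + z)]
    refine or_congr Iff.rfl ?_
    constructor
    · intro h; have := H'.add_mem h (keyf y); convert this using 1; abel
    · intro h; have := H'.sub_mem h (keyf y); convert this using 1; abel

/-- linear combination map -/
def combE (z1 z2 z3 z4 : V4) : V4 →+ V4 where
  toFun x := x.1 • z1 + x.2.1 • z2 + x.2.2.1 • z3 + x.2.2.2 • z4
  map_zero' := by simp
  map_add' x y := by simp only [Prod.fst_add, Prod.snd_add, add_smul]; abel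

lemma zmod2_cases (a : ZMod 2) : a = 0 ∨ a = 1 := by revert a; decide

lemma combE_apply (z1 z2 z3 z4 : V4) (x : V4) :
    combE z1 z2 z3 z4 x = x.1 • z1 + x.2.1 • z2 + x.2.2.1 • z3 + x.2.2.2 • z4 := rfl

lemma smul_mem_v4 (H : AddSubgroup V4) (a : ZMod 2) {z : V4} (hz : z ∈ H) : a • z ∈ H := by
  rcases zmod2_cases a with rfl | rfl
  · simp
  · simpa using hz

lemma mem_adj2_iff {H : AddSubgroup V4} {z x : V4} :
    x ∈ adj2 H z ↔ ∃ a : ZMod 2, ∃ h ∈ H, x = h + a • z := by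
  rw [mem_adj2]
  constructor
  · rintro (h | h)
    · exact ⟨0, x, h, by simp⟩
    · exact ⟨1, _, h, by simp⟩
  · rintro ⟨a, h, hh, rfl⟩
    rcases zmod2_cases a with rfl | rfl
    · left; simpa using hh
    · right; simpa using hh

lemma combE_bij (z1 z2 z3 z4 : V4) (h1 : z1 ∉ (⊥ : AddSubgroup V4)) (h2 : z2 ∉ adj2 ⊥ z1)
    (h3 : z3 ∉ adj2 (adj2 ⊥ z1) z2) (h4 : z4 ∉ adj2 (adj2 (adj2 ⊥ z1) z2) z3) :
    Function.Bijective (combE z1 z2 z3 z4) := by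
  rw [← Finite.injective_iff_bijective, injective_iff_map_eq_zero]
  rintro ⟨x1, x2, x3, x4⟩ hx
  rw [combE_apply] at hx
  simp only at hx
  have m : ∀ a b : V4, a + b = 0 → b = a := by
    intro a b h
    rw [← add_right_inj a, h, v4_two]
  have e4 : x4 = 0 := by
    rcases zmod2_cases x4 with h | rfl
    · exact h
    · exfalso; apply h4
      rw [one_smul] at hx
      rw [m _ _ hx]
      simp only [mem_adj2_iff]
      exact ⟨x3, _, ⟨x2, _, ⟨x1, _, AddSubgroup.zero_mem _, rfl⟩, rfl⟩, by simp⟩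
  subst e4
  rw [zero_smul, add_zero] at hx
  have e3 : x3 = 0 := by
    rcases zmod2_cases x3 with h | rfl
    · exact h
    · exfalso; apply h3
      rw [one_smul] at hx
      rw [m _ _ hx]
      simp only [mem_adj2_iff]
      exact ⟨x2, _, ⟨x1, _, AddSubgroup.zero_mem _, rfl⟩, by simp⟩
  subst e3
  rw [zero_smul, add_zero] at hx
  have e2 : x2 = 0 := by
    rcases zmod2_cases x2 with h | rfl
    · exact h
    · exfalso; apply h2
      rw [one_smul] at hx
      rw [m _ _ hx]
      simp only [mem_adj2_iff]
      exact ⟨x1, _, AddSubgroup.zero_mem _, by simp⟩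
  subst e2
  rw [zero_smul, add_zero] at hx
  have e1 : x1 = 0 := by
    rcases zmod2_cases x1 with h | rfl
    · exact h
    · exfalso; apply h1
      rw [one_smul] at hx
      simp [hx]
  subst e1
  rfl

lemma tri_form (f : V4 → V4) (f0 : f 0 = 0) (z1 z2 z3 z4 : V4)
    (k1 : ∀ x, f (x + z1) - f x - f z1 ∈ (⊥ : AddSubgroup V4))
    (k2 : ∀ x, f (x + z2) - f x - f z2 ∈ adj2 ⊥ (f z1))
    (k3 : ∀ x, f (x + z3) - f x - f z3 ∈ adj2 (adj2 ⊥ (f z1)) (f z2)) :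
    ∃ a b1 b2 b3 b4 : ZMod 2, ∀ x, f (combE z1 z2 z3 z4 x) =
      combE (f z1) (f z2) (f z3) (f z4) (triF a b1 b2 b3 b4 x) := by
  have k1' : ∀ x, f (x + z1) = f x + f z1 := by
    intro x
    have := k1 x
    rw [AddSubgroup.mem_bot, sub_sub, sub_eq_zero] at this
    exact this
  have k2' : ∀ x, ∃ s : ZMod 2, f (x + z2) = f x + f z2 + s • f z1 := by
    intro x
    have := k2 x
    rw [mem_adj2_iff] at this
    obtain ⟨s, h, hh, e⟩ := this
    rw [AddSubgroup.mem_bot] at hh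
    subst hh
    exact ⟨s, by rw [sub_sub, sub_eq_iff_eq_add] at e; rw [e]; abel⟩
  have k3' : ∀ x, ∃ s t : ZMod 2, f (x + z3) = f x + f z3 + t • f z2 + s • f z1 := by
    intro x
    have := k3 x
    rw [mem_adj2_iff] at this
    obtain ⟨t, h, hh, e⟩ := this
    rw [mem_adj2_iff] at hh
    obtain ⟨s, h, hh, e'⟩ := hh
    rw [AddSubgroup.mem_bot] at hh
    subst hh
    subst e'
    exact ⟨s, t, by rw [sub_sub, sub_eq_iff_eq_add] at e; rw [e]; abel⟩
  obtain ⟨b1, hb1⟩ := k2' z3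
  obtain ⟨b2, hb2⟩ := k2' z4
  obtain ⟨b3, a, hb3⟩ := k3' z4
  obtain ⟨c, hc⟩ := k2' (z4 + z3)
  obtain ⟨c0, hc0⟩ := k2' 0
  have hb4 : ∀ b1 b2 b3 c : ZMod 2, b1 + b2 + b3 + (c + b1 + b2) = b3 + c := by decide
  refine ⟨a, b1, b2, b3, c + b1 + b2, ?_⟩
  have base : ∀ x2 x3 x4 : ZMod 2, f (combE z1 z2 z3 z4 (0, x2, x3, x4)) =
      combE (f z1) (f z2) (f z3) (f z4) (triF a b1 b2 b3 (c + b1 + b2) (0, x2, x3, x4)) := by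
    intro x2 x3 x4
    rcases zmod2_cases x2 with rfl | rfl <;> rcases zmod2_cases x3 with rfl | rfl <;>
      rcases zmod2_cases x4 with rfl | rfl <;>
      simp only [combE_apply, triF, zero_smul, one_smul, zero_add, add_zero, mul_zero, mul_one,
        f0]
    · rw [add_comm, hb3]; abel
    · rw [add_comm, hb2]; abel
    · rw [add_comm, hb1]; abel
    · rw [show z2 + z3 + z4 = z4 + z3 + z2 by abel, hc, hb3, hb4]
      simp only [add_smul, one_smul]; abel
  rintro ⟨x1, x2, x3, x4⟩
  rcases zmod2_cases x1 with rfl | rfl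
  · exact base x2 x3 x4
  · have h1 := k1' (combE z1 z2 z3 z4 (0, x2, x3, x4))
    rw [base] at h1
    have e1 : combE z1 z2 z3 z4 (1, x2, x3, x4) = combE z1 z2 z3 z4 (0, x2, x3, x4) + z1 := by
      simp only [combE_apply, zero_smul, one_smul]; abel
    rw [e1, h1]
    simp only [combE_apply, triF, add_smul, zero_smul, one_smul]; abel

lemma uniL_add (s u : ZMod 2) (t x y : V4) : uniL s u t (x + y) = uniL s u t x + uniL s u t y := by
  ext <;> simp [uniL] <;> ring

lemma uniL_inj (s u : ZMod 2) (t : V4) : Function.Injective (uniL s u t) := by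
  rintro ⟨x1, x2, x3, x4⟩ ⟨y1, y2, y3, y4⟩ h
  simp only [uniL, Prod.mk.injEq] at h
  obtain ⟨h1, h2, h3, rfl⟩ := h
  have h3 := add_right_cancel h3
  have h2 := add_right_cancel h2
  subst h3; subst h2
  have h1 := add_right_cancel (add_right_cancel h1)
  rw [h1]

/-- the elementary abelian group of order 16 has the coloured Cayley isomorphism property -/
theorem colorCI {κ : Type*} (c c' : V4 → κ) (f : V4 ≃ V4)
    (hf : ∀ v w, c' (f v - f w) = c (v - w)) : ∃ g : V4 ≃+ V4, ∀ d, c' (g d) = c d := by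
  classical
  let M : Subgroup (Equiv.Perm V4) :=
    { carrier := {m | ∀ x y, c (m x - m y) = c (x - y)}
      one_mem' := by simp
      mul_mem' := by
        intro a b ha hb x y
        rw [Equiv.Perm.mul_apply, Equiv.Perm.mul_apply, ha, hb]
      inv_mem' := by
        intro a ha x y
        rw [← ha]; simp }
  have two : ∀ a : V4, Equiv.addRight a * Equiv.addRight a = (1 : Equiv.Perm V4) := by
    intro a; ext1 x; simp [add_assoc, v4_two]
  let P : Subgroup M :=
    { carrier := {m | ∃ a, m.1 = Equiv.addRight a}
      one_mem' := ⟨0, by ext1; simp⟩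
      mul_mem' := by
        rintro x y ⟨a, ha⟩ ⟨b, hb⟩
        refine ⟨b + a, ?_⟩
        rw [Subgroup.coe_mul, ha, hb]; ext1 v; simp [add_assoc]
      inv_mem' := by
        rintro x ⟨a, ha⟩
        refine ⟨-a, ?_⟩
        rw [Subgroup.coe_inv, ha, inv_eq_iff_mul_eq_one]; ext1 v; simp }
  let P' : Subgroup M :=
    { carrier := {m | ∃ a, m.1 = f.trans ((Equiv.addRight a).trans f.symm)}
      one_mem' := ⟨0, by ext1; simp⟩
      mul_mem' := by
        rintro x y ⟨a, ha⟩ ⟨b, hb⟩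
        refine ⟨b + a, ?_⟩
        rw [Subgroup.coe_mul, ha, hb]; ext1 v; simp [add_assoc]
      inv_mem' := by
        rintro x ⟨a, ha⟩
        refine ⟨-a, ?_⟩
        rw [Subgroup.coe_inv, ha, inv_eq_iff_mul_eq_one]; ext1 v; simp }
  have hP : IsPGroup 2 P := by
    rintro ⟨x, a, ha⟩
    refine ⟨1, ?_⟩
    ext1; ext1
    simp [pow_two, ha, two]
  have hP' : IsPGroup 2 P' := by
    rintro ⟨x, a, ha⟩
    refine ⟨1, ?_⟩
    ext1; ext1; ext1 v
    simp [pow_two, ha, add_assoc, v4_two]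
  obtain ⟨S, hS⟩ := hP.exists_le_sylow
  obtain ⟨S', hS'⟩ := hP'.exists_le_sylow
  have : Fact (Nat.Prime 2) := ⟨Nat.prime_two⟩
  obtain ⟨m, hm⟩ := MulAction.exists_smul_eq M S' S
  have mem1 : ∀ a : V4, Equiv.addRight a ∈ M := by
    intro a x y; simp
  have mem2 : ∀ a : V4, f.trans ((Equiv.addRight a).trans f.symm) ∈ M := by
    intro a x y
    simp only [Equiv.coe_trans, Function.comp, Equiv.coe_addRight]
    rw [← hf, ← hf]; simp
  let T : Subgroup (Equiv.Perm V4) := (S : Subgroup M).map M.subtype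
  have hT : IsPGroup 2 T := S.isPGroup'.map _
  let f1 : V4 ≃ V4 := (m⁻¹ : M).1.trans f
  have hf1 : ∀ v w, c' (f1 v - f1 w) = c (v - w) := by
    intro v w
    simp only [f1, Equiv.coe_trans, Function.comp]
    rw [hf]; exact (m⁻¹ : M).2 v w
  let f2 : V4 ≃ V4 := f1.trans (Equiv.addRight (-(f1 0)))
  have hf2 : ∀ v w, c' (f2 v - f2 w) = c (v - w) := by
    intro v w
    simp only [f2, Equiv.coe_trans, Function.comp, Equiv.coe_addRight]
    rw [← hf1]; simp
  have f20 : f2 0 = 0 := by simp [f2]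
  have hTP : ∀ a : V4, Equiv.addRight a ∈ T := fun a =>
    ⟨⟨_, mem1 a⟩, hS ⟨a, rfl⟩, rfl⟩
  have hTP' : ∀ a : V4, f2.trans ((Equiv.addRight a).trans f2.symm) ∈ T := by
    intro a
    have h1 : (⟨_, mem2 a⟩ : M) ∈ S' := hS' ⟨a, rfl⟩
    have h2 : m * ⟨_, mem2 a⟩ * m⁻¹ ∈ S := by
      rw [← hm]
      rw [Sylow.smul_def]
      exact Subgroup.smul_mem_pointwise_smul _ (MulAut.conj m) _ h1
    refine ⟨_, h2, ?_⟩
    ext1 v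
    simp [f2, f1]
    congr 2
    abel
  have g0 : GoodPair T f2 ⊥ ⊥ := by
    refine ⟨?_, ?_⟩
    · intro t _ x y h
      rw [AddSubgroup.mem_bot, sub_eq_zero] at h ⊢
      rw [h]
    · intro x y
      simp [sub_eq_zero]
  have c0 : Nat.card (⊥ : AddSubgroup V4) = 1 := by simp
  obtain ⟨z1, n1, g1, k1, c1⟩ := tri_step T hT hTP f2 f20 hTP' _ _ g0 (by omega)
  obtain ⟨z2, n2, g2, k2, c2⟩ := tri_step T hT hTP f2 f20 hTP' _ _ g1 (by omega)
  obtain ⟨z3, n3, g3, k3, c3⟩ := tri_step T hT hTP f2 f20 hTP' _ _ g2 (by omega)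
  obtain ⟨z4, n4, g4, k4, c4⟩ := tri_step T hT hTP f2 f20 hTP' _ _ g3 (by omega)
  have tr : ∀ {H H' : AddSubgroup V4} {z : V4}, GoodPair T f2 H H' → z ∉ H → f2 z ∉ H' := by
    intro H H' z hg hz h
    apply hz
    have := (hg.2 z 0).2 (by simpa [f20] using h)
    simpa using this
  have b1 := combE_bij z1 z2 z3 z4 n1 n2 n3 n4
  have b2 := combE_bij (f2 z1) (f2 z2) (f2 z3) (f2 z4) (tr g0 n1) (tr g1 n2) (tr g2 n3) (tr g3 n4)
  obtain ⟨a, q1, q2, q3, q4, hq⟩ := tri_form f2 f20 z1 z2 z3 z4 k1 k2 k3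
  obtain ⟨s, t1, t2, ht⟩ := triF_check a q1 q2 q3 q4
  let U : V4 ≃+ V4 := AddEquiv.ofBijective (AddMonoidHom.mk' (uniL s 0 (t1, t2, 0, 0)) (uniL_add _ _ _))
    (Finite.injective_iff_bijective.1 (uniL_inj _ _ _))
  let E := AddEquiv.ofBijective _ b1
  let E' := AddEquiv.ofBijective _ b2
  refine ⟨(E.symm.trans U).trans E', ?_⟩
  intro d
  obtain ⟨v, hv⟩ := ht (E.symm d)
  have : E' (U (E.symm d)) = f2 (E (v + E.symm d)) - f2 (E v) := by
    change E' (uniL s 0 (t1, t2, 0, 0) (E.symm d)) = _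
    rw [← hv, map_sub]
    simp only [E, AddEquiv.ofBijective_apply, hq, E']
  change c' (E' (U (E.symm d))) = c d
  rw [this, hf2, map_add]
  simp

open Classical in
lemma match_lemma {α β ι : Type} [Fintype α] [Fintype β] [Fintype ι] [Nonempty ι]
    (e : α × ι ≃ β × ι) : ∃ p : α → β, Function.Bijective p ∧ ∀ a, ∃ i, (e (a, i)).1 = p a := by
  let t : α → Finset β := fun a => Finset.univ.image (fun i => (e (a, i)).1)
  have hall := (Finset.all_card_le_biUnion_card_iff_exists_injective t).1 (by
    intro s
    have h1 : (s ×ˢ (Finset.univ : Finset ι)).card ≤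
        ((s.biUnion t) ×ˢ (Finset.univ : Finset ι)).card := by
      refine Finset.card_le_card_of_injOn e ?_ e.injective.injOn
      rintro ⟨a, i⟩ h
      simp only [Finset.coe_product, Set.mem_prod, Finset.mem_coe, Finset.mem_univ, and_true] at h
      simp only [Finset.coe_product, Set.mem_prod, Finset.mem_coe, Finset.mem_univ, and_true,
        Finset.mem_biUnion, t, Finset.mem_image, true_and]
      exact ⟨a, h, i, rfl⟩
    rw [Finset.card_product, Finset.card_product] at h1
    exact Nat.le_of_mul_le_mul_right h1 (Finset.card_pos.2 Finset.univ_nonempty))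
  obtain ⟨p, hp, hp'⟩ := hall
  refine ⟨p, ?_, fun a => ?_⟩
  · rw [Fintype.bijective_iff_injective_and_card]
    refine ⟨hp, ?_⟩
    have := Fintype.card_congr e
    rw [Fintype.card_prod, Fintype.card_prod] at this
    exact Nat.eq_of_mul_eq_mul_right Fintype.card_pos this
  · have := hp' a
    simp only [t, Finset.mem_image, Finset.mem_univ, true_and] at this
    exact this

abbrev W := V4 × ZMod 3

lemma comp_lemma (τ τ' : V4 → ZMod 3) (f : W → W)
    (h1 : ∀ x y : W, (if (y - x).2 = 0 then τ (y - x).1 else 0) =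
      (if (f y - f x).2 = 0 then τ' (f y - f x).1 else 0))
    (x y : W) (hxy : (y - x).2 = 0 ∧ (y - x).1 ∈ AddSubgroup.closure {v | τ v ≠ 0}) :
    (f y - f x).2 = 0 ∧ (f y - f x).1 ∈ AddSubgroup.closure {v | τ' v ≠ 0} := by
  obtain ⟨ha, hb⟩ := hxy
  have key : ∀ k ∈ AddSubgroup.closure {v | τ v ≠ 0}, ∀ x : W, (f (x + (k, 0)) - f x).2 = 0 ∧
      (f (x + (k, 0)) - f x).1 ∈ AddSubgroup.closure {v | τ' v ≠ 0} := by
    intro k hk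
    induction hk using AddSubgroup.closure_induction with
    | mem k hk =>
      intro x
      have := h1 x (x + (k, 0))
      simp only [add_sub_cancel_left, if_true] at this
      have hk' : τ k ≠ 0 := hk
      rw [this] at hk'
      split_ifs at hk' with h
      · exact ⟨h, AddSubgroup.subset_closure hk'⟩
      · exact absurd rfl hk'
    | zero => 
      intro x
      have : x + ((0 : V4), (0 : ZMod 3)) = x := add_zero x
      rw [this, sub_self]
      exact ⟨rfl, AddSubgroup.zero_mem _⟩
    | add a b _ _ iha ihb =>
      intro x
      have e : x + (a + b, (0 : ZMod 3)) = x + (a, 0) + (b, 0) := by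
        refine Prod.ext ?_ ?_ <;> simp [add_assoc]
      have e2 : f (x + (a + b, (0 : ZMod 3))) - f x =
        (f (x + (a, 0) + (b, 0)) - f (x + (a, 0))) + (f (x + (a, 0)) - f x) := by rw [e]; abel
      rw [e2]
      obtain ⟨p1, p2⟩ := iha x
      obtain ⟨q1, q2⟩ := ihb (x + (a, 0))
      refine ⟨by rw [Prod.snd_add, p1, q1, add_zero], ?_⟩
      rw [Prod.fst_add]; exact AddSubgroup.add_mem _ q2 p2
    | neg a _ iha =>
      intro x
      obtain ⟨p1, p2⟩ := iha (x + (-a, 0))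
      have e : x + (-a, (0 : ZMod 3)) + (a, 0) = x := by
        refine Prod.ext ?_ ?_ <;> simp
      rw [e] at p1 p2
      rw [← neg_sub, Prod.snd_neg, Prod.fst_neg, p1, neg_zero]
      exact ⟨rfl, AddSubgroup.neg_mem _ p2⟩
  have := key _ hb x
  have e : x + ((y - x).1, (0 : ZMod 3)) = y := by
    rw [← ha, Prod.mk.eta]; abel
  rwa [e] at this

theorem fold_lemma (τ τ' β β' : V4 → ZMod 3) (f : W ≃ W)
    (h1 : ∀ x y : W, (if (y - x).2 = 0 then τ (y - x).1 else 0) =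
      (if (f y - f x).2 = 0 then τ' (f y - f x).1 else 0))
    (h2 : ∀ x y : W, β (y - x).1 = β' (f y - f x).1) :
    ∃ g : V4 ≃+ V4, ∀ d, τ' (g d) = τ d ∧ β' (g d) = β d := by
  classical
  set K := AddSubgroup.closure {v | τ v ≠ 0} with hK
  set K' := AddSubgroup.closure {v | τ' v ≠ 0} with hK'
  have h3 : ∀ x y : W, ((y - x).2 = 0 ∧ (y - x).1 ∈ K) ↔
      ((f y - f x).2 = 0 ∧ (f y - f x).1 ∈ K') := by
    intro x y
    refine ⟨comp_lemma τ τ' f h1 x y, fun h => ?_⟩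
    have := comp_lemma τ' τ f.symm (fun x y => by
      have := h1 (f.symm x) (f.symm y)
      simp only [Equiv.apply_symm_apply] at this
      exact this.symm) (f x) (f y) h
    simpa using this
  let F : (V4 ⧸ K) × ZMod 3 → (V4 ⧸ K') × ZMod 3 := fun p =>
    (QuotientAddGroup.mk (f (p.1.out, p.2)).1, (f (p.1.out, p.2)).2)
  have hF : ∀ v i, F (QuotientAddGroup.mk v, i) = (QuotientAddGroup.mk (f (v, i)).1, (f (v, i)).2) := by
    intro v i
    have hout : -(QuotientAddGroup.mk v : V4 ⧸ K).out + v ∈ K := by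
      rw [← QuotientAddGroup.eq]; exact Quotient.out_eq' _
    have := (h3 ((QuotientAddGroup.mk v : V4 ⧸ K).out, i) (v, i)).1
      ⟨by simp, by rw [← sub_eq_neg_add] at hout; exact hout⟩
    obtain ⟨p1, p2⟩ := this
    simp only [F]
    refine Prod.ext ?_ ?_
    · rw [QuotientAddGroup.eq, ← sub_eq_neg_add]; exact p2
    · rw [Prod.snd_sub, sub_eq_zero] at p1; exact p1.symm
  have hFi : Function.Injective F := by
    rintro ⟨a, i⟩ ⟨b, j⟩ h
    obtain ⟨v, rfl⟩ := QuotientAddGroup.mk_surjective a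
    obtain ⟨w, rfl⟩ := QuotientAddGroup.mk_surjective b
    rw [hF, hF, Prod.mk.injEq, QuotientAddGroup.eq, ← sub_eq_neg_add] at h
    have := (h3 (v, i) (w, j)).2 ⟨by rw [Prod.snd_sub, h.2, sub_self], h.1⟩
    obtain ⟨p1, p2⟩ := this
    refine Prod.ext ?_ ?_
    · rw [QuotientAddGroup.eq, ← sub_eq_neg_add]; exact p2
    · exact (sub_eq_zero.1 p1).symm
  have hFs : Function.Surjective F := by
    rintro ⟨b, j⟩
    obtain ⟨w, rfl⟩ := QuotientAddGroup.mk_surjective b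
    refine ⟨(QuotientAddGroup.mk (f.symm (w, j)).1, (f.symm (w, j)).2), ?_⟩
    rw [hF]; simp
  have : Fintype (V4 ⧸ K) := Fintype.ofFinite _
  have : Fintype (V4 ⧸ K') := Fintype.ofFinite _
  obtain ⟨p, hp, hp'⟩ := match_lemma (Equiv.ofBijective F ⟨hFi, hFs⟩)
  choose ix hix0 using hp'
  have hix : ∀ a, (F (a, ix a)).1 = p a := hix0
  let φ : V4 → V4 := fun v => (f (v, ix (QuotientAddGroup.mk v))).1
  have hφp : ∀ v, (QuotientAddGroup.mk (φ v) : V4 ⧸ K') = p (QuotientAddGroup.mk v) := by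
    intro v; rw [← hix, hF]
  have hsame : ∀ v w, (QuotientAddGroup.mk (φ v) : V4 ⧸ K') = QuotientAddGroup.mk (φ w) →
      (QuotientAddGroup.mk v : V4 ⧸ K) = QuotientAddGroup.mk w := by
    intro v w h
    rw [hφp, hφp] at h; exact hp.1 h
  have hlay : ∀ v w, (QuotientAddGroup.mk v : V4 ⧸ K) = QuotientAddGroup.mk w → ∃ i,
      φ v = (f (v, i)).1 ∧ φ w = (f (w, i)).1 ∧ (f (v, i) - f (w, i)).2 = 0 := by
    intro v w h
    refine ⟨ix (QuotientAddGroup.mk v), rfl, by simp only [φ, h], ?_⟩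
    refine ((h3 _ _).1 ⟨by simp, ?_⟩).1
    rw [eq_comm, QuotientAddGroup.eq, ← sub_eq_neg_add] at h
    exact h
  have hφi : Function.Injective φ := by
    intro v w h
    have h4 := hsame v w (by rw [h])
    obtain ⟨i, e1, e2, e3⟩ := hlay v w h4
    have : f (v, i) = f (w, i) := by
      refine Prod.ext ?_ ?_
      · rw [← e1, ← e2, h]
      · exact sub_eq_zero.1 e3
    exact (Prod.mk.inj (f.injective this)).1
  have hτ : ∀ v w, τ' (φ v - φ w) = τ (v - w) := by
    intro v w
    by_cases h : (QuotientAddGroup.mk v : V4 ⧸ K) = QuotientAddGroup.mk w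
    · obtain ⟨i, e1, e2, e3⟩ := hlay v w h
      have := h1 (w, i) (v, i)
      rw [if_pos (by simp), if_pos e3] at this
      rw [e1, e2]; exact this.symm
    · have z1 : τ (v - w) = 0 := by
        by_contra h5
        apply h
        rw [eq_comm, QuotientAddGroup.eq, ← sub_eq_neg_add]
        exact AddSubgroup.subset_closure h5
      have z2 : τ' (φ v - φ w) = 0 := by
        by_contra h5
        apply h
        apply hsame
        rw [eq_comm, QuotientAddGroup.eq, ← sub_eq_neg_add]
        exact AddSubgroup.subset_closure h5
      rw [z1, z2]
  have hβ : ∀ v w, β' (φ v - φ w) = β (v - w) := by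
    intro v w
    exact (h2 (w, ix (QuotientAddGroup.mk w)) (v, ix (QuotientAddGroup.mk v))).symm
  obtain ⟨g, hg⟩ := colorCI (fun d => (τ d, β d)) (fun d => (τ' d, β' d))
    (Equiv.ofBijective φ (Finite.injective_iff_bijective.1 hφi))
    (fun v w => by simp only [Equiv.ofBijective_apply, hτ, hβ])
  exact ⟨g, fun d => Prod.mk.inj (hg d)⟩

/-- Cayley matrix of a function -/
def cayM (c : W → ZMod 3) : Matrix W W (ZMod 3) := Matrix.of fun x y => c (y - x)

def perM (g : W) : Matrix W W (ZMod 3) := cayM (Pi.single g 1)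

lemma perM_mul (g h : W) : perM g * perM h = perM (g + h) := by
  ext x y
  simp only [perM, cayM, Matrix.mul_apply, Matrix.of_apply, Pi.single_apply, ite_mul, one_mul,
    zero_mul]
  rw [Finset.sum_eq_single (x + g)]
  · simp only [add_sub_cancel_left, if_true]
    congr 1
    rw [eq_iff_iff]
    constructor
    · intro e; rw [← e]; abel
    · intro e; rw [← sub_sub, e]; abel
  · intro b _ hb
    rw [if_neg]
    intro h; apply hb; rw [← h]; abel
  · simp

lemma cayM_eq (c : W → ZMod 3) : cayM c = ∑ g, c g • perM g := by
  ext x y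
  rw [Matrix.sum_apply]
  simp [perM, cayM, Pi.single_apply]

lemma pow3_sum (s : Finset W) (c : W → ZMod 3) :
    (∑ g ∈ s, c g • perM g) ^ 3 = ∑ g ∈ s, c g • perM (g + g + g) := by
  have hcomm : ∀ g h, Commute (perM g) (perM h) := by
    intro g h; rw [Commute, SemiconjBy, perM_mul, perM_mul, add_comm]
  have hc3 : ∀ a : ZMod 3, a ^ 3 = a := by decide
  have : Fact (Nat.Prime 3) := ⟨Nat.prime_three⟩
  classical
  induction s using Finset.induction_on with
  | empty => simp
  | insert a s ha ih =>
    rw [Finset.sum_insert ha, Finset.sum_insert ha, add_pow_char_of_commute (p := 3), ih]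
    · refine congrArg (· + _) ?_
      rw [smul_pow, hc3, pow_succ, pow_two, perM_mul, perM_mul]
    · refine Commute.sum_right _ _ _ fun i _ => ?_
      exact ((hcomm a i).smul_right _).smul_left _

lemma v4_three (v : V4) : v + v + v = v := by rw [v4_two, zero_add]
lemma z3_three (i : ZMod 3) : i + i + i = 0 := by revert i; decide

lemma cayM_pow (c : W → ZMod 3) (x y : W) : (cayM c ^ 3) x y =
    if (y - x).2 = 0 then c ((y - x).1, 0) + c ((y - x).1, 1) + c ((y - x).1, 2) else 0 := by
  rw [cayM_eq, pow3_sum, Matrix.sum_apply, Fintype.sum_prod_type, Finset.sum_comm]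
  simp only [Matrix.smul_apply, perM, cayM, Matrix.of_apply, Pi.single_apply, smul_eq_mul,
    mul_ite, mul_one, mul_zero, Prod.mk_add_mk, v4_three, z3_three]
  have e : ∀ v : V4, (y - x = (v, (0 : ZMod 3))) ↔ ((y - x).1 = v ∧ (y - x).2 = 0) := by
    intro v; rw [Prod.ext_iff]
  simp only [e]
  split_ifs with h
  · simp only [h, and_true, Finset.sum_ite_eq, Finset.mem_univ, if_true]
    exact Fin.sum_univ_three (fun i : Fin 3 => c ((y - x).1, (i : ZMod 3)))
  · simp only [h, and_false, if_false, Finset.sum_const_zero]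

lemma cayM_inv (c c' : W → ZMod 3) (f : W ≃ W) (h : ∀ x y, c (y - x) = c' (f y - f x))
    (x y : W) : (cayM c ^ 3) x y = (cayM c' ^ 3) (f x) (f y) := by
  have hM : cayM c = (cayM c').submatrix f f := by
    ext x y
    exact h x y
  have hM3 : cayM c ^ 3 = (cayM c' ^ 3).submatrix f f := by
    rw [hM, pow_three, pow_three, Matrix.submatrix_mul_equiv, Matrix.submatrix_mul_equiv]
  rw [hM3, Matrix.submatrix_apply]

lemma z3_cases (i : ZMod 3) : i = 0 ∨ i = 1 ∨ i = 2 := by revert i; decide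
lemma z3_aux (a b : ZMod 3) : a = b - (b + a + a) := by revert a b; decide

open Classical in
noncomputable def chi (C : Set W) (x : W) : ZMod 3 := if x ∈ C then 1 else 0

lemma chi_iff (C C' : Set W) (x y : W) : chi C x = chi C' y ↔ (x ∈ C ↔ y ∈ C') := by
  have h01 : (0 : ZMod 3) ≠ 1 := by decide
  unfold chi
  by_cases h : x ∈ C <;> by_cases h' : y ∈ C' <;> simp [h, h']

lemma chi_sym (C : Set W) (hC : ∀ x, x ∈ C → -x ∈ C) (v : V4) : chi C (v, 2) = chi C (v, 1) := by
  rw [chi_iff]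
  have e1 : -((v, 1) : W) = (v, 2) := by
    refine Prod.ext ?_ (show (-1 : ZMod 3) = 2 by decide)
    change -v = v
    rw [neg_eq_iff_add_eq_zero, v4_two]
  rw [← e1]
  exact ⟨fun h => by simpa using hC _ h, hC _⟩

noncomputable def tauC (C : Set W) (v : V4) : ZMod 3 := chi C (v, 0) + chi C (v, 1) + chi C (v, 2)

lemma beta_eq (C : Set W) (hC : ∀ x, x ∈ C → -x ∈ C) (d : W) :
      chi C (d.1, 1) = chi C d - (if d.2 = 0 then tauC C d.1 else 0) := by
  obtain ⟨v, i⟩ := d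
  rcases z3_cases i with rfl | rfl | rfl
  · rw [if_pos rfl, tauC, chi_sym C hC]; exact z3_aux _ _
  · rw [if_neg (show (1 : ZMod 3) ≠ 0 by decide), sub_zero]
  · rw [if_neg (show (2 : ZMod 3) ≠ 0 by decide), sub_zero, chi_sym C hC]

theorem addCI (C C' : Set W) (hC : ∀ x, x ∈ C → -x ∈ C) (hC' : ∀ x, x ∈ C' → -x ∈ C')
    (f : W ≃ W) (hf : ∀ x y, y - x ∈ C ↔ f y - f x ∈ C') :
    ∃ σ : W ≃+ W, ∀ x, x ∈ C ↔ σ x ∈ C' := by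
  have hch : ∀ x y, chi C (y - x) = chi C' (f y - f x) := by
    intro x y; rw [chi_iff]; exact hf x y
  have h1 : ∀ x y : W, (if (y - x).2 = 0 then tauC C (y - x).1 else 0) =
      (if (f y - f x).2 = 0 then tauC C' (f y - f x).1 else 0) := by
    intro x y
    have := cayM_inv (chi C) (chi C') f hch x y
    rw [cayM_pow, cayM_pow] at this
    exact this
  obtain ⟨g, hg⟩ := fold_lemma (tauC C) (tauC C') (fun v => chi C (v, 1)) (fun v => chi C' (v, 1))
    f h1 (by
      intro x y
      rw [beta_eq C hC, beta_eq C' hC', h1, hch])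
  refine ⟨g.prodCongr (AddEquiv.refl _), ?_⟩
  have hinv : ∀ d, chi C' (g d, 0) = chi C (d, 0) ∧ chi C' (g d, 1) = chi C (d, 1) := by
    intro d
    obtain ⟨e1, e2⟩ := hg d
    simp only [tauC, chi_sym C hC, chi_sym C' hC'] at e1 e2
    refine ⟨?_, e2⟩
    rw [e2] at e1
    exact add_right_cancel (add_right_cancel e1)
  intro x
  change x ∈ C ↔ (g x.1, x.2) ∈ C'
  rw [← chi_iff]
  obtain ⟨v, i⟩ := x
  rcases z3_cases i with rfl | rfl | rfl
  · exact (hinv v).1.symm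
  · exact (hinv v).2.symm
  · rw [chi_sym C hC, chi_sym C' hC']; exact (hinv v).2.symm

section CayleyBasics

variable {G : Type*} [Group G]

lemma cay_adj {C : Set G} (h1 : (1 : G) ∉ C) (hs : C⁻¹ = C) (g h : G) :
    (cayleyGraph G C).Adj g h ↔ h * g⁻¹ ∈ C := by
  unfold cayleyGraph
  rw [SimpleGraph.fromRel_adj]
  have e : g * h⁻¹ ∈ C ↔ h * g⁻¹ ∈ C := by
    conv_lhs => rw [← hs]
    rw [Set.mem_inv]; simp
  rw [e, or_self]
  constructor
  · exact fun h => h.2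
  · intro hh
    refine ⟨?_, hh⟩
    rintro rfl
    apply h1; simpa using hh

lemma ci_of_equiv_model (θ : G ≃* Multiplicative W) : IsCIGroup G := by
  intro C C' h1 hs h1' hs' ⟨F⟩
  let D : Set G → Set W := fun C => {w | θ.symm (Multiplicative.ofAdd w) ∈ C}
  have hD : ∀ C : Set G, C⁻¹ = C → ∀ x, x ∈ D C → -x ∈ D C := by
    intro C hs x hx
    change θ.symm (Multiplicative.ofAdd (-x)) ∈ C
    rw [ofAdd_neg, map_inv, ← hs, Set.mem_inv, inv_inv]
    exact hx
  let t : W ≃ G := Multiplicative.ofAdd.trans θ.symm.toEquiv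
  have ht : ∀ x y, t (y - x) = t y * (t x)⁻¹ := by
    intro x y
    simp only [t, Equiv.coe_trans, Function.comp, MulEquiv.toEquiv_eq_coe, MulEquiv.coe_toEquiv,
      ofAdd_sub, map_mul, map_inv, div_eq_mul_inv]
  have htD : ∀ C x, x ∈ D C ↔ t x ∈ C := fun C x => Iff.rfl
  obtain ⟨σ, hσ⟩ := addCI (D C) (D C') (hD C hs) (hD C' hs')
    (t.trans (F.toEquiv.trans t.symm)) (by
      intro x y
      rw [htD, htD, ht, ht, ← cay_adj h1 hs]
      simp only [Equiv.coe_trans, Function.comp, Equiv.apply_symm_apply]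
      rw [← cay_adj h1' hs']
      exact (F.map_adj_iff).symm)
  refine ⟨(θ.trans (AddEquiv.toMultiplicative σ)).trans θ.symm, ?_⟩
  ext y
  constructor
  · rintro ⟨x, hx, rfl⟩
    have := (hσ (θ x).toAdd).1 (by change θ.symm _ ∈ C; simpa using hx)
    exact this
  · intro hy
    refine ⟨θ.symm (Multiplicative.ofAdd (σ.symm (θ y).toAdd)), ?_, ?_⟩
    · have := (hσ (σ.symm (θ y).toAdd)).2 (by
        rw [AddEquiv.apply_symm_apply]; change θ.symm _ ∈ C'; simpa using hy)
      exact this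
    · simp

lemma lift_iso [Finite G] (H K : Subgroup G) (ψ : H ≃ K) (C C' : Set G)
    (hC : C ⊆ H) (hC' : C' ⊆ K)
    (hψ : ∀ a b : H, (b : G) * (a : G)⁻¹ ∈ C ↔ (ψ b : G) * (ψ a : G)⁻¹ ∈ C') :
    ∃ e : G ≃ G, ∀ x y, y * x⁻¹ ∈ C ↔ e y * (e x)⁻¹ ∈ C' := by
  classical
  have hcard : Nat.card (Quotient (QuotientGroup.rightRel H)) =
      Nat.card (Quotient (QuotientGroup.rightRel K)) := by
    rw [Nat.card_congr (QuotientGroup.quotientRightRelEquivQuotientLeftRel H),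
      Nat.card_congr (QuotientGroup.quotientRightRelEquivQuotientLeftRel K)]
    have h1 := Subgroup.card_eq_card_quotient_mul_card_subgroup H
    have h2 := Subgroup.card_eq_card_quotient_mul_card_subgroup K
    rw [h1, Nat.card_congr ψ] at h2
    exact Nat.eq_of_mul_eq_mul_right Nat.card_pos h2
  obtain ⟨q⟩ : Nonempty (Quotient (QuotientGroup.rightRel H) ≃
      Quotient (QuotientGroup.rightRel K)) := Finite.card_eq.1 hcard
  let mH : G → Quotient (QuotientGroup.rightRel H) := fun x => Quotient.mk _ x
  let mK : G → Quotient (QuotientGroup.rightRel K) := fun x => Quotient.mk _ x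
  have eH : ∀ x y, mH x = mH y ↔ y * x⁻¹ ∈ H := by
    intro x y
    rw [← QuotientGroup.rightRel_apply]; exact Quotient.eq
  have eK : ∀ x y, mK x = mK y ↔ y * x⁻¹ ∈ K := by
    intro x y
    rw [← QuotientGroup.rightRel_apply]; exact Quotient.eq
  have oH : ∀ x, x * (mH x).out⁻¹ ∈ H := by
    intro x; rw [← eH]; exact Quotient.out_eq _
  have oK : ∀ a, mK a.out = a := fun a => Quotient.out_eq _
  let e : G → G := fun x => (ψ ⟨_, oH x⟩ : G) * (q (mH x)).out
  have me : ∀ x, mK (e x) = q (mH x) := by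
    intro x
    rw [← oK (q (mH x)), eq_comm, eK]
    simp [e]
  have hdiff : ∀ x y, mH x = mH y → e y * (e x)⁻¹ = (ψ ⟨_, oH y⟩ : G) * (ψ ⟨_, oH x⟩ : G)⁻¹ := by
    intro x y h
    simp only [e, h]; group
  have hdiff' : ∀ x y, mH x = mH y → y * x⁻¹ = (y * (mH y).out⁻¹) * (x * (mH x).out⁻¹)⁻¹ := by
    intro x y h
    rw [h]; group
  have hi : Function.Injective e := by
    intro x y h
    have h1 : mH x = mH y := by
      apply q.injective; rw [← me, ← me, h]
    have h2 := hdiff x y h1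
    rw [h, mul_inv_cancel, eq_comm, mul_inv_eq_one] at h2
    have h3 := congrArg Subtype.val (ψ.injective (Subtype.ext h2))
    simp only [h1] at h3
    exact (mul_right_cancel h3).symm
  refine ⟨Equiv.ofBijective e (Finite.injective_iff_bijective.1 hi), ?_⟩
  intro x y
  simp only [Equiv.ofBijective_apply]
  by_cases h : mH x = mH y
  · rw [hdiff x y h, hdiff' x y h]
    exact hψ ⟨_, oH x⟩ ⟨_, oH y⟩
  · constructor
    · intro h1; exact absurd ((eH x y).2 (hC h1)) h
    · intro h1
      have := (eK _ _).2 (hC' h1)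
      rw [me, me] at this
      exact absurd (q.injective this) h

lemma ci_use [Finite G] (hG : IsCIGroup G) (H K : Subgroup G) (ψ : H ≃ K) (C C' : Set G)
    (hC : C ⊆ H) (hC' : C' ⊆ K) (h1 : (1 : G) ∉ C) (hs : C⁻¹ = C) (h1' : (1 : G) ∉ C')
    (hs' : C'⁻¹ = C')
    (hψ : ∀ a b : H, (b : G) * (a : G)⁻¹ ∈ C ↔ (ψ b : G) * (ψ a : G)⁻¹ ∈ C') :
    ∃ σ : G ≃* G, σ '' C = C' := by
  obtain ⟨e, he⟩ := lift_iso H K ψ C C' hC hC' hψ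
  refine hG C C' h1 hs h1' hs' ⟨⟨e, ?_⟩⟩
  intro a b
  rw [cay_adj h1 hs, cay_adj h1' hs', he]

lemma ci_subgroups [Finite G] (hG : IsCIGroup G) (H K : Subgroup G)
    (hcard : Nat.card H = Nat.card K) : ∃ σ : G ≃* G, ∀ x, x ∈ H ↔ σ x ∈ K := by
  have hs : ∀ H : Subgroup G, ((H : Set G) \ {1})⁻¹ = (H : Set G) \ {1} := by
    intro H; ext x; simp
  obtain ⟨ψ⟩ := Finite.card_eq.1 hcard
  obtain ⟨σ, hσ⟩ := ci_use hG H K ψ ((H : Set G) \ {1}) ((K : Set G) \ {1})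
    Set.sdiff_subset Set.sdiff_subset (by simp) (hs H) (by simp) (hs K) (by
      intro a b
      have e1 : (b : G) * (a : G)⁻¹ ∈ H := H.mul_mem b.2 (H.inv_mem a.2)
      have e2 : ∀ a b : K, (b : G) * (a : G)⁻¹ ∈ K :=
        fun a b => K.mul_mem b.2 (K.inv_mem a.2)
      simp only [Set.mem_sdiff, SetLike.mem_coe, e1, e2, true_and, Set.mem_singleton_iff,
        mul_inv_eq_one, SetLike.coe_eq_coe, EmbeddingLike.apply_eq_iff_eq])
  refine ⟨σ, fun x => ?_⟩
  by_cases hx : x = 1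
  · simp [hx, H.one_mem, K.one_mem]
  · have : x ∈ (H : Set G) \ {1} ↔ σ x ∈ (K : Set G) \ {1} := by
      rw [← hσ]
      constructor
      · exact fun h => ⟨x, h, rfl⟩
      · rintro ⟨y, hy, e⟩
        rwa [← σ.injective e]
    simpa [hx] using this

/-- no element of order 16 -/
lemma ci_no16 [Finite G] (hG : IsCIGroup G) (x : G) : orderOf x ≠ 16 := by
  intro hx
  let S : ZMod 16 → Prop := fun k => k = 1 ∨ k = 7 ∨ k = 9 ∨ k = 15 ∨ k = 2 ∨ k = 14
  let S' : ZMod 16 → Prop := fun k => k = 3 ∨ k = 5 ∨ k = 11 ∨ k = 13 ∨ k = 2 ∨ k = 14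
  let H := Subgroup.zpowers x
  have hcH : Nat.card (Multiplicative (ZMod 16)) = Nat.card H := by
    rw [Nat.card_zpowers, hx]; simp
  let θ : Multiplicative (ZMod 16) ≃* H := mulEquivOfCyclicCardEq hcH
  let φ0 : ZMod 16 → ZMod 16 := fun k => if k.val % 2 = 0 then -k else 4 - k
  have hφ : Function.Involutive φ0 := by
    change ∀ k, φ0 (φ0 k) = k
    decide
  let φ : Equiv.Perm (Multiplicative (ZMod 16)) := 
    Multiplicative.toAdd.trans (hφ.toPerm.trans Multiplicative.ofAdd)
  let ι : Multiplicative (ZMod 16) →* G := H.subtype.comp θ.toMonoidHom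
  have hι : Function.Injective ι := Subtype.val_injective.comp θ.injective
  let im : (ZMod 16 → Prop) → Set G := fun S => ι '' {k | S k.toAdd}
  have mem_im : ∀ S k, ι k ∈ im S ↔ S k.toAdd := by
    intro S k
    exact hι.mem_set_image
  have hsub : ∀ S, im S ⊆ H := by
    rintro S _ ⟨k, _, rfl⟩
    exact (θ k).2
  have hone : ∀ S : ZMod 16 → Prop, ¬ S 0 → (1 : G) ∉ im S := by
    intro S h0 h
    rw [← map_one ι, mem_im] at h
    exact h0 h
  have hinv : ∀ S : ZMod 16 → Prop, (∀ k, S k → S (-k)) → (im S)⁻¹ = im S := by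
    intro S hS
    ext y
    rw [Set.mem_inv]
    constructor
    · rintro ⟨k, hk, e⟩
      refine ⟨k⁻¹, hS _ hk, ?_⟩
      rw [map_inv, e, inv_inv]
    · rintro ⟨k, hk, rfl⟩
      exact ⟨k⁻¹, hS _ hk, by rw [map_inv]⟩
  have hdec : ∀ a b : ZMod 16, S (b - a) ↔ S' (φ0 b - φ0 a) := by decide
  obtain ⟨σ, hσ⟩ := ci_use hG H H (θ.symm.toEquiv.trans (φ.trans θ.toEquiv)) (im S) (im S')
    (hsub S) (hsub S') (hone S (by decide)) (hinv S (by decide)) (hone S' (by decide))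
    (hinv S' (by decide)) (by
      intro a b
      obtain ⟨a, rfl⟩ := θ.surjective a
      obtain ⟨b, rfl⟩ := θ.surjective b
      have e1 : ((θ b : H) : G) * ((θ a : H) : G)⁻¹ = ι (b * a⁻¹) := by
        rw [map_mul, map_inv]; rfl
      have e2 : ((θ (φ b) : H) : G) * ((θ (φ a) : H) : G)⁻¹ = ι (φ b * (φ a)⁻¹) := by
        rw [map_mul, map_inv]; rfl
      have e3 : ∀ c, (θ.symm.toEquiv.trans (φ.trans θ.toEquiv)) (θ c) = θ (φ c) := by
        intro c; simp
      rw [e3, e3, e1, e2, mem_im, mem_im]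
      have := hdec a.toAdd b.toAdd
      rw [sub_eq_add_neg, sub_eq_add_neg] at this
      exact this)
  have m1 : σ (ι (Multiplicative.ofAdd 1)) ∈ im S' := by
    rw [← hσ]; exact ⟨_, (mem_im S _).2 (Or.inl rfl), rfl⟩
  have m2 : σ (ι (Multiplicative.ofAdd 2)) ∈ im S' := by
    rw [← hσ]; exact ⟨_, (mem_im S _).2 (by decide), rfl⟩
  obtain ⟨k, hk, e⟩ := m1
  have e2 : (Multiplicative.ofAdd 2 : Multiplicative (ZMod 16)) =
    Multiplicative.ofAdd 1 * Multiplicative.ofAdd 1 := by decide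
  rw [e2, map_mul, map_mul, ← e, ← map_mul, mem_im] at m2
  have hfin : ∀ k : ZMod 16, S' k → ¬ S' (k + k) := by decide
  exact hfin _ hk m2

end CayleyBasics

section GroupTheory

lemma finset_exists_notMem {P : Type*} [Finite P] (s : Finset P) (h : s.card < Nat.card P) :
    ∃ x, x ∉ s := by
  by_contra hc
  push Not at hc
  have : (s : Set P) = Set.univ := Set.eq_univ_of_forall hc
  have h2 := Set.ncard_coe_finset s
  rw [this, Set.ncard_univ] at h2
  omega

/-- no group of order 16 with a unique involution has all elements of order at most 4 -/
lemma p16_exists8 {P : Type*} [Group P] [Finite P] (hcard : Nat.card P = 16) (z : P)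
    (hz2 : z * z = 1) (hz : ∀ x : P, x * x = 1 → x = 1 ∨ x = z)
    (h4 : ∀ x : P, x * x * (x * x) = 1) : False := by
  classical
  have zc : ∀ y, y * z = z * y := by
    intro y
    have h1 : (y * z * y⁻¹) * (y * z * y⁻¹) = 1 := by
      rw [show (y * z * y⁻¹) * (y * z * y⁻¹) = y * (z * z) * y⁻¹ by group, hz2]; group
    rcases hz _ h1 with h | h
    · have : z = 1 := by
        have h5 : y * z * y⁻¹ = 1 := h
        rw [mul_inv_eq_one] at h5
        simpa using h5
      rw [this]; simp
    · rwa [mul_inv_eq_iff_eq_mul] at h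
  have hsq : ∀ x : P, x * x = 1 ∨ x * x = z := fun x => hz _ (h4 x)
  have hsq' : ∀ x : P, x ≠ 1 → x ≠ z → x * x = z := by
    intro x h1 h2
    rcases hsq x with h | h
    · rcases hz x h with h | h <;> contradiction
    · exact h
  have hinv : ∀ y : P, y⁻¹ = y ∨ y⁻¹ = z * y := by
    intro y
    rcases hsq y with h | h
    · left; rw [inv_eq_iff_mul_eq_one]; exact h
    · right; rw [inv_eq_iff_mul_eq_one, ← mul_assoc, zc, mul_assoc, h, hz2]
  obtain ⟨x, hx⟩ := finset_exists_notMem ({1, z} : Finset P) (by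
    rw [hcard]; exact lt_of_le_of_lt Finset.card_le_two (by norm_num))
  simp only [Finset.mem_insert, Finset.mem_singleton, not_or] at hx
  let S : Finset P := {1, z, x⁻¹, x⁻¹ * z}
  have hS : S.card ≤ 4 := Finset.card_le_four
  have hcent : ∀ y, x * y = y * x → y ∈ S := by
    intro y hy
    by_cases h1 : y = 1
    · simp [S, h1]
    by_cases h2 : y = z
    · simp [S, h2]
    have h3 : (x * y) * (x * y) = 1 := by
      have : (x * y) * (x * y) = (x * x) * (y * y) := by
        rw [mul_assoc, ← mul_assoc y x y, ← hy]; group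
      rw [this, hsq' x hx.1 hx.2, hsq' y h1 h2, hz2]
    rcases hz _ h3 with h | h
    · have : y = x⁻¹ := (inv_eq_of_mul_eq_one_right h).symm
      simp [S, this]
    · have : y = x⁻¹ * z := by rw [← h]; group
      simp [S, this]
  have hcomm : ∀ y, x * y = y * x ∨ x * y = z * (y * x) := by
    intro y
    have e : x * y = (y⁻¹ * x⁻¹)⁻¹ := by group
    have zz : ∀ a : P, z * (z * a) = a := by intro a; rw [← mul_assoc, hz2, one_mul]
    rcases hinv (x * y) with h | h <;> rcases hinv x with h' | h' <;> rcases hinv y with h'' | h'' <;>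
      rw [mul_inv_rev, h', h''] at h
    · left; exact h.symm
    · right; rw [← h, mul_assoc]
    · right; rw [← h, ← mul_assoc, zc, mul_assoc]
    · left; rw [← h, mul_assoc, ← mul_assoc y z x, zc, mul_assoc z y x, zz]
    · right; rw [h, zz]
    · left; rw [mul_assoc] at h; exact (mul_left_cancel h).symm
    · left; rw [← mul_assoc, zc, mul_assoc] at h; exact (mul_left_cancel h).symm
    · right
      rw [mul_assoc, ← mul_assoc y z x, zc, mul_assoc z y x, zz] at h
      rw [h, zz]
  obtain ⟨y, hy⟩ := finset_exists_notMem S (by omega)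
  obtain ⟨w, hw⟩ := finset_exists_notMem (S ∪ S.image (· * y)) (by
    have h1 := Finset.card_union_le S (S.image (· * y))
    have h2 := Finset.card_image_le (s := S) (f := (· * y))
    omega)
  simp only [Finset.mem_union, Finset.mem_image, not_or, not_exists, not_and] at hw
  have cy : x * y = z * (y * x) := (hcomm y).resolve_left (fun h => hy (hcent y h))
  have cw : x * w = z * (w * x) := (hcomm w).resolve_left (fun h => hw.1 (hcent w h))
  apply hw.2 (w * y⁻¹) _ (by group)
  apply hcent
  have c1 : x * y⁻¹ = z * (y⁻¹ * x) := by
    have : y⁻¹ * (x * y) * y⁻¹ = y⁻¹ * (z * (y * x)) * y⁻¹ := by rw [cy]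
    rw [← mul_assoc z, ← zc y] at this
    have e2 : y⁻¹ * (y * z * x) * y⁻¹ = z * (x * y⁻¹) := by group
    rw [e2] at this
    have e3 : y⁻¹ * (x * y) * y⁻¹ = y⁻¹ * x := by group
    rw [e3] at this
    rw [this, ← mul_assoc, hz2, one_mul]
  calc x * (w * y⁻¹) = (x * w) * y⁻¹ := by group
    _ = z * w * (x * y⁻¹) := by rw [cw]; group
    _ = z * w * (z * (y⁻¹ * x)) := by rw [c1]
    _ = z * (w * z) * (y⁻¹ * x) := by group
    _ = z * (z * w) * (y⁻¹ * x) := by rw [zc]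
    _ = (z * z) * (w * y⁻¹ * x) := by group
    _ = w * y⁻¹ * x := by rw [hz2, one_mul]

lemma p16_cyc {P : Type*} [Group P] [Finite P] (hcard : Nat.card P = 16) (z : P)
    (hz : ∀ x : P, x * x = 1 → x = 1 ∨ x = z)
    (x : P) (hx : orderOf x = 8)
    (h8 : ∀ H : Subgroup P, Nat.card H = 8 → ∃ u ∈ H, orderOf u = 8) : ∃ y : P, orderOf y = 16 := by
  by_contra hno
  push Not at hno
  have : Fact (Nat.Prime 2) := ⟨Nat.prime_two⟩
  have hpow8 : ∀ y : P, y ^ 8 = 1 := by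
    intro y
    have h1 : orderOf y ∣ 2 ^ 4 := by
      have := orderOf_dvd_natCard y; rwa [hcard] at this
    obtain ⟨k, hk, hk'⟩ := (Nat.dvd_prime_pow Nat.prime_two).1 h1
    have h2 := hno y
    rw [← orderOf_dvd_iff_pow_eq_one, hk']
    interval_cases k <;> simp_all
  have hxk : ∀ k : ℕ, x ^ k = 1 ↔ 8 ∣ k := by intro k; rw [← orderOf_dvd_iff_pow_eq_one, hx]
  have hxx : ∀ k l : ℕ, x ^ k = x ^ l ↔ k % 8 = l % 8 := by
    intro k l; rw [pow_eq_pow_iff_modEq, hx]; rfl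
  let N := Subgroup.zpowers x
  have hN : Nat.card N = 8 := by rw [Nat.card_zpowers, hx]
  have hNi : N.index = 2 := by
    have := N.card_mul_index
    rw [hN, hcard] at this; omega
  have hsqN : ∀ y, y * y ∈ N := by
    intro y; rw [← pow_two]; exact Subgroup.sq_mem_of_index_two hNi y
  have memN : ∀ y ∈ N, ∃ k < 8, y = x ^ k := by
    intro y hy
    obtain ⟨k, hk⟩ := Subgroup.mem_zpowers_iff.1 hy
    refine ⟨(k % 8).toNat, by omega, ?_⟩
    rw [← hk, ← zpow_natCast, Int.toNat_of_nonneg (by omega)]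
    have h3 := zpow_mod_orderOf x k
    rw [hx] at h3
    exact h3.symm
  have hz4 : x ^ 4 = z := by
    have h1 : x ^ 4 * x ^ 4 = 1 := by rw [← pow_add, hxk]
    rcases hz _ h1 with h | h
    · rw [hxk] at h; omega
    · exact h
  have hzN : z ∈ N := by rw [← hz4]; exact N.pow_mem (Subgroup.mem_zpowers x) 4
  have hord : ∀ y, y ∉ N → y ^ 4 ≠ 1 := by
    intro y hy h4
    have h2 : y ^ 2 ≠ 1 := by
      intro h
      rw [pow_two] at h
      rcases hz _ h with h | h
      · exact hy (h ▸ N.one_mem)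
      · exact hy (h ▸ hzN)
    have ho : orderOf y = 2 ^ (1 + 1) := by
      apply orderOf_eq_prime_pow
      · simpa using h2
      · simpa using h4
    obtain ⟨K, hK, hyK⟩ := Sylow.exists_subgroup_card_pow_prime_le (p := 2) (n := 2) (m := 3)
      (by rw [hcard]; norm_num) (Subgroup.zpowers y) (by rw [Nat.card_zpowers, ho]) (by norm_num)
    obtain ⟨u, huK, hu⟩ := h8 K (by rw [hK]; norm_num)
    have hKu : Subgroup.zpowers u = K := by
      apply Subgroup.eq_of_le_of_card_ge
      · rw [Subgroup.zpowers_le]; exact huK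
      · rw [hK, Nat.card_zpowers, hu]; norm_num
    have hyu : y ∈ Subgroup.zpowers u := by rw [hKu]; exact hyK (Subgroup.mem_zpowers y)
    obtain ⟨k, hk⟩ := Subgroup.mem_zpowers_iff.1 hyu
    rcases Int.even_or_odd' k with ⟨j, hj | hj⟩
    · apply hy
      have := hsqN (u ^ j)
      rw [← zpow_add, ← two_mul, ← hj, hk] at this
      exact this
    · rw [← hk, ← zpow_natCast, ← zpow_mul, ← orderOf_dvd_iff_zpow_eq_one, hu] at h4
      push_cast at h4
      omega
  obtain ⟨y0, hy0⟩ : ∃ y, y ∉ N := by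
    by_contra hc
    push Not at hc
    have : N = ⊤ := (Subgroup.eq_top_iff' N).2 hc
    rw [this, Subgroup.index_top] at hNi
    omega
  have hy : ∃ y, y ∉ N ∧ y * y = x ^ 6 := by
    obtain ⟨k, hk, e⟩ := memN _ (hsqN y0)
    have a1 : 8 ∣ k * 4 := by
      rw [← hxk, pow_mul, ← e, ← pow_two, ← pow_mul]; exact hpow8 y0
    have a2 : ¬ 8 ∣ k * 2 := by
      rw [← hxk, pow_mul, ← e, ← pow_two, ← pow_mul]; exact hord y0 hy0
    have : k = 2 ∨ k = 6 := by omega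
    rcases this with rfl | rfl
    · refine ⟨y0⁻¹, fun h => hy0 (by simpa using N.inv_mem h), ?_⟩
      rw [← mul_inv_rev, e, inv_eq_iff_mul_eq_one, ← pow_add, hxk]
    · exact ⟨y0, hy0, e⟩
  obtain ⟨y, hyN, hy2⟩ := hy
  have hnorm : N.Normal := Subgroup.normal_of_index_eq_two hNi
  obtain ⟨k, hk, e⟩ := memN _ (hnorm.conj_mem x (Subgroup.mem_zpowers x) y)
  have hc6 : y * x ^ 6 * y⁻¹ = x ^ 6 := by rw [← hy2]; group
  have hk6 : x ^ (k * 6) = x ^ 6 := by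
    rw [pow_mul, ← e, conj_pow]; exact hc6
  rw [hxx] at hk6
  have hyx : (y * x) * (y * x) = x ^ (k + 7) := by
    have : (y * x) * (y * x) = (y * x * y⁻¹) * (y * y) * x := by group
    rw [this, e, hy2, ← pow_add, ← pow_succ]
  apply hord (y * x) 
  · intro h
    apply hyN
    have := N.mul_mem h (N.inv_mem (Subgroup.mem_zpowers x))
    simpa using this
  · rw [show (4 : ℕ) = 2 * 2 by norm_num, pow_mul, pow_two (y * x), hyx, ← pow_mul, hxk]
    omega

variable {G : Type*} [Group G]

lemma klein (a b : G) (ha : a * a = 1) (hb : b * b = 1) (hab : a * b = b * a)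
    (ha1 : a ≠ 1) (hb1 : b ≠ 1) (hne : a ≠ b) :
    ∃ V : Subgroup G, Nat.card V = 4 ∧ ∀ x, x ∈ V ↔ x = 1 ∨ x = a ∨ x = b ∨ x = a * b := by
  classical
  have aab : ∀ c, a * (a * c) = c := by intro c; rw [← mul_assoc, ha, one_mul]
  have bbc : ∀ c, b * (b * c) = c := by intro c; rw [← mul_assoc, hb, one_mul]
  have bac : ∀ c, b * (a * c) = a * (b * c) := by intro c; rw [← mul_assoc, ← hab, mul_assoc]
  let V : Subgroup G :=
    { carrier := {x | x = 1 ∨ x = a ∨ x = b ∨ x = a * b}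
      one_mem' := Or.inl rfl
      mul_mem' := by
        rintro x y (rfl | rfl | rfl | rfl) (rfl | rfl | rfl | rfl) <;>
          simp [ha, hb, aab, bbc, bac, ← hab, mul_assoc]
      inv_mem' := by
        rintro x (rfl | rfl | rfl | rfl)
        · simp
        · right; left; rw [inv_eq_iff_mul_eq_one]; exact ha
        · right; right; left; rw [inv_eq_iff_mul_eq_one]; exact hb
        · right; right; right; rw [inv_eq_iff_mul_eq_one, mul_assoc, bac, hb, mul_one, ha] }
  refine ⟨V, ?_, fun x => Iff.rfl⟩
  have hs : (V : Set G) = (({1, a, b, a * b} : Finset G) : Set G) := by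
    ext x
    simp only [Finset.coe_insert, Finset.coe_singleton, Set.mem_insert_iff, Set.mem_singleton_iff]
    exact Iff.rfl
  have h1 : Nat.card V = (V : Set G).ncard := rfl
  rw [h1, hs, Set.ncard_coe_finset]
  have e1 : a * b ≠ 1 := by
    intro h; apply hne; rw [← mul_right_inj a, ha, h]
  rw [Finset.card_insert_of_notMem, Finset.card_insert_of_notMem, Finset.card_insert_of_notMem,
    Finset.card_singleton]
  · simp only [Finset.mem_singleton]
    intro h; apply ha1; rwa [right_eq_mul] at h
  · simp only [Finset.mem_singleton, Finset.mem_insert, not_or]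
    refine ⟨hne, ?_⟩
    intro h; apply hb1; rwa [left_eq_mul] at h
  · simp only [Finset.mem_singleton, Finset.mem_insert, not_or]
    exact ⟨ha1.symm, hb1.symm, e1.symm⟩

end GroupTheory

section Forward

variable {G : Type*} [Group G] [Finite G]

lemma ci_inv_conj (hG : IsCIGroup G) {a b : G} (ha : orderOf a = 2) (hb : orderOf b = 2) :
    ∃ σ : G ≃* G, σ a = b := by
  obtain ⟨σ, hσ⟩ := ci_subgroups hG (Subgroup.zpowers a) (Subgroup.zpowers b)
    (by rw [Nat.card_zpowers, Nat.card_zpowers, ha, hb])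
  refine ⟨σ, ?_⟩
  have h1 := (hσ a).1 (Subgroup.mem_zpowers a)
  have ha1 : a ≠ 1 := by
    rintro rfl
    simp at ha
  have hb2 : b ^ 2 = 1 := by rw [← hb]; exact pow_orderOf_eq_one b
  obtain ⟨k, hk⟩ := Subgroup.mem_zpowers_iff.1 h1
  have hb2' : b ^ (2 : ℤ) = 1 := by exact_mod_cast hb2
  rcases Int.even_or_odd' k with ⟨m, rfl | rfl⟩
  · rw [zpow_mul, hb2', one_zpow] at hk
    exact absurd (σ.map_eq_one_iff.1 hk.symm) ha1
  · rw [zpow_add, zpow_mul, hb2', one_zpow, one_mul, zpow_one] at hk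
    exact hk.symm

lemma ci_no4 (h48 : Nat.card G = 48) (hG : IsCIGroup G) (x : G) : orderOf x ≠ 4 := by
  intro hx
  have nocomm : ∀ a b : G, a * a = 1 → b * b = 1 → a * b = b * a → a ≠ 1 → b ≠ 1 → a = b := by
    intro a b ha hb hab ha1 hb1
    by_contra hne
    obtain ⟨V, hV, hm⟩ := klein a b ha hb hab ha1 hb1 hne
    obtain ⟨σ, hσ⟩ := ci_subgroups hG (Subgroup.zpowers x) V
      (by rw [Nat.card_zpowers, hx, hV])
    have h1 := (hm _).1 ((hσ x).1 (Subgroup.mem_zpowers x))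
    have h2 : σ x * σ x = 1 := by
      rcases h1 with h | h | h | h <;> rw [h]
      · simp
      · exact ha
      · exact hb
      · calc a * b * (a * b) = a * (b * a) * b := by group
          _ = (a * a) * (b * b) := by rw [← hab]; group
          _ = 1 := by rw [ha, hb, one_mul]
    have h3 : x ^ 2 = 1 := by
      rw [pow_two]
      apply σ.injective
      rw [map_mul, h2, map_one]
    have := orderOf_dvd_of_pow_eq_one h3
    rw [hx] at this
    norm_num at this
  obtain ⟨P, hP⟩ := Sylow.exists_subgroup_card_pow_prime (G := G) 2 (n := 4)
    (by rw [h48]; norm_num)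
  have hP16 : Nat.card P = 16 := by rw [hP]; norm_num
  have hpg : IsPGroup 2 P := IsPGroup.of_card hP
  haveI : Nontrivial P := by
    rw [← Finite.one_lt_card_iff_nontrivial, hP16]; norm_num
  haveI := hpg.center_nontrivial
  have hc2 : 2 ∣ Nat.card (Subgroup.center P) := by
    have hd : Nat.card (Subgroup.center P) ∣ 2 ^ 4 := by
      rw [← hP]; exact Subgroup.card_subgroup_dvd_card _
    obtain ⟨k, -, hk⟩ := (Nat.dvd_prime_pow Nat.prime_two).1 hd
    have h1 : 1 < Nat.card (Subgroup.center P) := Finite.one_lt_card_iff_nontrivial.2 inferInstance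
    rw [hk] at h1 ⊢
    rcases k with _ | k
    · simp at h1
    · exact dvd_pow_self 2 (by simp)
  obtain ⟨z, hz⟩ := exists_prime_orderOf_dvd_card' (G := Subgroup.center P) 2 hc2
  have hzz : (z : P) * z = 1 := by
    have := pow_orderOf_eq_one z
    rw [hz, pow_two] at this
    exact_mod_cast this
  have hz1 : (z : P) ≠ 1 := by
    intro h
    have : z = 1 := by exact_mod_cast h
    rw [this] at hz
    simp at hz
  have huniq : ∀ y : P, y * y = 1 → y = 1 ∨ y = z := by
    intro y hy
    by_cases h1 : y = 1
    · exact Or.inl h1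
    right
    have hcomm := Subgroup.mem_center_iff.1 z.2 y
    have := nocomm (y : G) (z : P) (by exact_mod_cast hy) (by exact_mod_cast hzz)
      (by exact_mod_cast hcomm) (by exact_mod_cast h1) (by exact_mod_cast hz1)
    exact_mod_cast this
  by_cases h4 : ∀ y : P, y * y * (y * y) = 1
  · exact p16_exists8 hP16 z hzz huniq h4
  push Not at h4
  obtain ⟨y, hy⟩ := h4
  have hy4 : ¬ orderOf y ∣ 4 := by
    intro h
    apply hy
    have := orderOf_dvd_iff_pow_eq_one.1 h
    rw [← this]
    simp only [pow_succ, pow_zero, one_mul, mul_assoc]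
  have hyd : orderOf y ∣ 2 ^ 4 := by rw [← hP]; exact orderOf_dvd_natCard y
  obtain ⟨k, hk, hyk⟩ := (Nat.dvd_prime_pow Nat.prime_two).1 hyd
  have hn16 : ∀ w : P, orderOf w ≠ 16 := by
    intro w hw
    exact ci_no16 hG (w : G) (by rw [Subgroup.orderOf_coe, hw])
  have hy8 : orderOf y = 8 := by
    have := hn16 y
    interval_cases k <;> simp_all
  obtain ⟨w, hw⟩ := p16_cyc hP16 z huniq y hy8 (by
    intro H hH
    obtain ⟨σ, hσ⟩ := ci_subgroups hG (Subgroup.zpowers (y : G)) (H.map P.subtype)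
      (by rw [Nat.card_zpowers, Subgroup.orderOf_coe, hy8, Subgroup.card_subtype, hH])
    obtain ⟨u, hu, hue⟩ := (hσ y).1 (Subgroup.mem_zpowers _)
    refine ⟨u, hu, ?_⟩
    rw [← Subgroup.orderOf_coe]
    change orderOf (P.subtype u) = 8
    rw [hue, MulEquiv.orderOf_eq, Subgroup.orderOf_coe, hy8])
  exact hn16 w hw

lemma top_of48 (h48 : Nat.card G = 48) {P Z : Subgroup G} (hP : Nat.card P = 16) {q : G}
    (hq : orderOf q = 3) (hPZ : P ≤ Z) (hqZ : q ∈ Z) : Z = ⊤ := by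
  apply Subgroup.eq_top_of_card_eq
  have h1 : 16 ∣ Nat.card Z := by rw [← hP]; exact Subgroup.card_dvd_of_le hPZ
  have h2 : 3 ∣ Nat.card Z := by rw [← hq]; exact Subgroup.orderOf_dvd_natCard Z hqZ
  have h3 : Nat.card Z ∣ 48 := by rw [← h48]; exact Subgroup.card_subgroup_dvd_card Z
  rw [h48]
  apply Nat.dvd_antisymm h3
  have : 16 * 3 ∣ Nat.card Z := Nat.Coprime.mul_dvd_of_dvd_of_dvd (by norm_num) h1 h2
  simpa using this

lemma sq_one_comm {P : Subgroup G} (hsq : ∀ x ∈ P, x * x = 1) {x y : G} (hx : x ∈ P)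
    (hy : y ∈ P) : x * y = y * x := by
  have h1 := hsq x hx
  have h2 := hsq y hy
  have h3 := hsq _ (P.mul_mem hx hy)
  have h4 : x⁻¹ = x := inv_eq_of_mul_eq_one_left h1
  have h5 : y⁻¹ = y := inv_eq_of_mul_eq_one_left h2
  have h6 : (x * y)⁻¹ = x * y := inv_eq_of_mul_eq_one_left h3
  rw [mul_inv_rev, h4, h5] at h6
  exact h6.symm

lemma exists_central (h48 : Nat.card G = 48) (hG : IsCIGroup G) {P : Subgroup G}
    (hP : Nat.card P = 16) (hsq : ∀ x ∈ P, x * x = 1) {q : G} (hq : orderOf q = 3) :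
    ∃ d : G, d ∈ P ∧ d ≠ 1 ∧ ∀ g, g * d = d * g := by
  by_cases hn : P.Normal
  · have hq3 : q * q * q = 1 := by
      have := pow_orderOf_eq_one q
      rw [hq] at this
      rw [← this]
      simp only [pow_succ, pow_zero, one_mul]
    by_cases hc : ∃ x ∈ P, x ≠ 1 ∧ q * x = x * q
    · obtain ⟨x, hx, hx1, hxq⟩ := hc
      refine ⟨x, hx, hx1, ?_⟩
      have : Subgroup.centralizer {x} = ⊤ := by
        apply top_of48 h48 hP hq
        · intro y hy
          rw [Subgroup.mem_centralizer_singleton_iff]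
          exact sq_one_comm hsq hy hx
        · rw [Subgroup.mem_centralizer_singleton_iff]
          exact hxq
      intro g
      have hg : g ∈ Subgroup.centralizer {x} := by rw [this]; trivial
      rw [Subgroup.mem_centralizer_singleton_iff] at hg
      exact hg
    · exfalso
      push Not at hc
      have hcj : ∀ x ∈ P, q * x * q⁻¹ ∈ P := fun x hx => hn.conj_mem x hx q
      haveI : Nontrivial P := by
        rw [← Finite.one_lt_card_iff_nontrivial, hP]; norm_num
      obtain ⟨x', hx'⟩ := exists_ne (1 : P)
      obtain ⟨x, hx⟩ := x'
      have hx1 : x ≠ 1 := fun h => hx' (Subtype.ext h)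
      clear hx'
      obtain ⟨x1, hx1d⟩ : ∃ x1, x1 = q * x * q⁻¹ := ⟨_, rfl⟩
      obtain ⟨x2, hx2d⟩ : ∃ x2, x2 = q * x1 * q⁻¹ := ⟨_, rfl⟩
      have hx1P : x1 ∈ P := hx1d ▸ hcj x hx
      have hx2P : x2 ∈ P := hx2d ▸ hcj x1 hx1P
      have hqx2 : q * x2 * q⁻¹ = x := by
        rw [hx2d, hx1d]
        calc q * (q * (q * x * q⁻¹) * q⁻¹) * q⁻¹ = (q * q * q) * x * (q * q * q)⁻¹ := by group
          _ = x := by rw [hq3]; group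
      have hprod : x * x1 * x2 = 1 := by
        by_contra hne
        apply hc _ (P.mul_mem (P.mul_mem hx hx1P) hx2P) hne
        have e1 : q * (x * x1 * x2) * q⁻¹ = x * x1 * x2 := by
          calc q * (x * x1 * x2) * q⁻¹ = (q * x * q⁻¹) * (q * x1 * q⁻¹) * (q * x2 * q⁻¹) := by group
            _ = x1 * x2 * x := by rw [← hx1d, ← hx2d, hqx2]
            _ = x * (x1 * x2) := sq_one_comm hsq (P.mul_mem hx1P hx2P) hx
            _ = x * x1 * x2 := by group
        exact mul_inv_eq_iff_eq_mul.1 e1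
      have hx2e : x2 = x * x1 := by
        have h1 := hsq _ (P.mul_mem hx hx1P)
        exact mul_left_cancel (hprod.trans h1.symm)
      have hxx1 : x ≠ x1 := by
        intro h
        apply hc x hx hx1
        rw [hx1d] at h
        exact (mul_inv_eq_iff_eq_mul.1 h.symm)
      have hx11 : x1 ≠ 1 := by
        intro h
        rw [hx1d] at h
        exact hx1 (conj_eq_one_iff.1 h)
      obtain ⟨V, hV, hVm⟩ := klein x x1 (hsq x hx) (hsq x1 hx1P) (sq_one_comm hsq hx hx1P) hx1
        hx11 hxx1
      have hVP : ∀ v ∈ V, v ∈ P := by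
        intro v hv
        rcases (hVm v).1 hv with rfl | rfl | rfl | rfl
        · exact P.one_mem
        · exact hx
        · exact hx1P
        · exact P.mul_mem hx hx1P
      have hVq : ∀ v ∈ V, q * v * q⁻¹ ∈ V := by
        intro v hv
        rcases (hVm v).1 hv with h | h | h | h
        · rw [h]; simp
        · rw [h, ← hx1d, hVm]; simp
        · rw [h, ← hx2d, hx2e, hVm]; simp
        · rw [h, ← hx2e, hqx2, hVm]; simp
      have hVn : ∀ g : G, ∀ v ∈ V, g * v * g⁻¹ ∈ V := by
        have : Subgroup.normalizer (V : Set G) = ⊤ := by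
          apply top_of48 h48 hP hq
          · intro y hy
            apply Subgroup.mem_normalizer_fintype
            intro v hv
            rw [sq_one_comm hsq hy (hVP v hv), mul_inv_cancel_right]
            exact hv
          · apply Subgroup.mem_normalizer_fintype
            exact hVq
        intro g v hv
        have hg : g ∈ Subgroup.normalizer (V : Set G) := by rw [this]; trivial
        exact (Subgroup.mem_normalizer_iff.1 hg v).1 hv
      obtain ⟨y, hyP, hyV⟩ : ∃ y ∈ P, y ∉ V := by
        by_contra hcon
        push Not at hcon
        have := Subgroup.card_dvd_of_le (H := P) (K := V) hcon
        rw [hP, hV] at this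
        norm_num at this
      have hy1 : y ≠ 1 := by rintro rfl; exact hyV V.one_mem
      have hxV : x ∈ V := by rw [hVm]; simp
      have hxy : x ≠ y := by rintro rfl; exact hyV hxV
      obtain ⟨V', hV', hVm'⟩ := klein x y (hsq x hx) (hsq y hyP) (sq_one_comm hsq hx hyP) hx1
        hy1 hxy
      obtain ⟨σ, hσ⟩ := ci_subgroups hG V V' (by rw [hV, hV'])
      have hx1V' : x1 ∈ V' := by
        have h1 : x ∈ V' := by rw [hVm']; simp
        have h2 : σ.symm x ∈ V := by rw [hσ]; simpa using h1
        have h3 := (hσ _).1 (hVn (σ.symm q) _ h2)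
        rw [hx1d]
        simpa using h3
      have hx1V : x1 ∈ V := by rw [hVm]; simp
      rcases (hVm' x1).1 hx1V' with h | h | h | h
      · exact hx11 h
      · exact hxx1 h.symm
      · exact hyV (h ▸ hx1V)
      · apply hyV
        have : y = x⁻¹ * x1 := by rw [h]; group
        rw [this]
        exact V.mul_mem (V.inv_mem hxV) hx1V
  · obtain ⟨g, x0, hx0, hgx⟩ : ∃ g : G, ∃ x ∈ P, g * x * g⁻¹ ∉ P := by
      by_contra hcon
      push Not at hcon
      exact hn ⟨fun x hx g => hcon g x hx⟩
    obtain ⟨P2, hP2d⟩ : ∃ P2 : Subgroup G, P2 = P.map (MulAut.conj g).toMonoidHom := ⟨_, rfl⟩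
    have hP2 : Nat.card P2 = 16 := by
      rw [hP2d, ← hP]
      exact (Nat.card_congr (P.equivMapOfInjective _ (MulAut.conj g).injective).toEquiv).symm
    have hsq2 : ∀ x ∈ P2, x * x = 1 := by
      intro x hx
      rw [hP2d] at hx
      obtain ⟨w, hw, rfl⟩ := hx
      rw [← map_mul, hsq w hw, map_one]
    have hxP2 : g * x0 * g⁻¹ ∈ P2 := by
      rw [hP2d]
      exact ⟨x0, hx0, by simp⟩
    have i1 : P.index = 3 := by
      have := P.card_mul_index
      rw [hP, h48] at this; omega
    have i2 : P2.index = 3 := by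
      have := P2.card_mul_index
      rw [hP2, h48] at this; omega
    have i3 := Subgroup.index_inf_le (H := P) (K := P2)
    have i4 := (P ⊓ P2).card_mul_index
    rw [i1, i2] at i3
    rw [h48] at i4
    have i5 : 1 < Nat.card (P ⊓ P2 : Subgroup G) := by
      by_contra hcon
      interval_cases Nat.card (P ⊓ P2 : Subgroup G) <;> omega
    haveI := Finite.one_lt_card_iff_nontrivial.1 i5
    obtain ⟨d', hd'⟩ := exists_ne (1 : (P ⊓ P2 : Subgroup G))
    obtain ⟨d, hd⟩ := d'
    have hd1 : d ≠ 1 := fun h => hd' (Subtype.ext h)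
    refine ⟨d, hd.1, hd1, ?_⟩
    have l1 : P ≤ Subgroup.centralizer {d} := by
      intro y hy
      rw [Subgroup.mem_centralizer_singleton_iff]
      exact sq_one_comm hsq hy hd.1
    have l2 : P2 ≤ Subgroup.centralizer {d} := by
      intro y hy
      rw [Subgroup.mem_centralizer_singleton_iff]
      exact sq_one_comm hsq2 hy hd.2
    have htop : Subgroup.centralizer {d} = ⊤ := by
      apply Subgroup.eq_top_of_card_eq
      obtain ⟨m, hm⟩ : 16 ∣ Nat.card (Subgroup.centralizer {d}) := by
        rw [← hP]; exact Subgroup.card_dvd_of_le l1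
      have h3 : Nat.card (Subgroup.centralizer {d}) ∣ 48 := by
        rw [← h48]; exact Subgroup.card_subgroup_dvd_card _
      have h4 : m ∣ 3 := by
        rw [hm] at h3
        exact Nat.dvd_of_mul_dvd_mul_left (k := 16) (by norm_num) h3
      rcases (Nat.dvd_prime Nat.prime_three).1 h4 with rfl | rfl
      · exfalso
        have := Subgroup.eq_of_le_of_card_ge l1 (by rw [hm, hP])
        rw [← this] at l2
        exact hgx (l2 hxP2)
      · rw [hm, h48]
    intro y
    have hy : y ∈ Subgroup.centralizer {d} := by rw [htop]; trivial
    rw [Subgroup.mem_centralizer_singleton_iff] at hy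
    exact hy

lemma ci_struct (h48 : Nat.card G = 48) (hG : IsCIGroup G) :
    ∃ (P : Subgroup G) (q : G), Nat.card P = 16 ∧ (∀ x ∈ P, x * x = 1) ∧ orderOf q = 3 ∧
      ∀ a b : G, a * b = b * a := by
  obtain ⟨P, hP⟩ := Sylow.exists_subgroup_card_pow_prime (G := G) 2 (n := 4)
    (by rw [h48]; norm_num)
  obtain ⟨q, hq⟩ := exists_prime_orderOf_dvd_card' (G := G) 3 (by rw [h48]; norm_num)
  have hP16 : Nat.card P = 16 := by rw [hP]; norm_num
  have hsq : ∀ x ∈ P, x * x = 1 := by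
    intro x hx
    have hxd : orderOf x ∣ 2 ^ 4 := by rw [← hP]; exact Subgroup.orderOf_dvd_natCard P hx
    obtain ⟨k, hk, hxk⟩ := (Nat.dvd_prime_pow Nat.prime_two).1 hxd
    have n8 : orderOf x ≠ 8 := by
      intro h
      apply ci_no4 h48 hG (x ^ 2)
      rw [orderOf_pow, h]
      norm_num
    have n4 := ci_no4 h48 hG x
    have n16 := ci_no16 hG x
    rw [← pow_two]
    apply orderOf_dvd_iff_pow_eq_one.1
    interval_cases k <;> simp_all
  refine ⟨P, q, hP16, hsq, hq, ?_⟩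
  obtain ⟨d, hdP, hd1, hdc⟩ := exists_central h48 hG hP16 hsq hq
  have ord2 : ∀ x ∈ P, x ≠ 1 → orderOf x = 2 := by
    intro x hx hx1
    apply orderOf_eq_prime _ hx1
    rw [pow_two]; exact hsq x hx
  have hPc : ∀ x ∈ P, ∀ g, g * x = x * g := by
    intro x hx g
    by_cases hx1 : x = 1
    · rw [hx1]; simp
    obtain ⟨σ, hσ⟩ := ci_inv_conj hG (ord2 d hdP hd1) (ord2 x hx hx1)
    have := congrArg σ (hdc (σ.symm g))
    rw [map_mul, map_mul, hσ] at this
    simpa using this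
  have hqc : ∀ g, g * q = q * g := by
    intro g
    have : Subgroup.centralizer {q} = ⊤ := by
      apply top_of48 h48 hP16 hq
      · intro y hy
        rw [Subgroup.mem_centralizer_singleton_iff]
        exact (hPc y hy q).symm
      · rw [Subgroup.mem_centralizer_singleton_iff]
    have hg : g ∈ Subgroup.centralizer {q} := by rw [this]; trivial
    rw [Subgroup.mem_centralizer_singleton_iff] at hg
    exact hg
  have hZ : Subgroup.center G = ⊤ := by
    apply top_of48 h48 hP16 hq
    · intro y hy
      rw [Subgroup.mem_center_iff]
      exact hPc y hy
    · rw [Subgroup.mem_center_iff]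
      exact hqc
  intro a b
  have hb : b ∈ Subgroup.center G := by rw [hZ]; trivial
  exact Subgroup.mem_center_iff.1 hb a

lemma elem16 {P : Type*} [CommGroup P] [Finite P] (hP : Nat.card P = 16)
    (hsq : ∀ x : P, x * x = 1) : Nonempty (P ≃* Multiplicative V4) := by
  haveI : Fact (Nat.Prime 2) := ⟨Nat.prime_two⟩
  letI : Module (ZMod 2) (Additive P) := AddCommGroup.zmodModule (by
    intro x
    rw [two_nsmul]
    exact hsq x)
  haveI : Fintype (Additive P) := Fintype.ofFinite _
  have h1 : Fintype.card (Additive P) = 16 := by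
    rw [← Nat.card_eq_fintype_card]; exact hP
  have h2 := Module.card_eq_pow_finrank (K := ZMod 2) (V := Additive P)
  rw [h1, ZMod.card] at h2
  have h3 : Module.finrank (ZMod 2) (Additive P) = 4 :=
    Nat.pow_right_injective (le_refl 2) (by simpa using h2.symm)
  have h4 : Module.finrank (ZMod 2) V4 = 4 := by
    simp [V4]
  obtain ⟨e⟩ := FiniteDimensional.nonempty_linearEquiv_of_finrank_eq (h3.trans h4.symm)
  exact ⟨(MulEquiv.toAdditive.symm e.toAddEquiv : _)⟩

lemma struct_model (h48 : Nat.card G = 48) {P : Subgroup G} {q : G} (hP : Nat.card P = 16)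
    (hsq : ∀ x ∈ P, x * x = 1) (hq : orderOf q = 3) (hc : ∀ a b : G, a * b = b * a) :
    Nonempty (G ≃* Multiplicative W) := by
  letI : CommGroup G := { (inferInstance : Group G) with mul_comm := hc }
  obtain ⟨e1⟩ := elem16 (P := P) hP (fun x => Subtype.ext (hsq x x.2))
  haveI : Fact (Nat.Prime 3) := ⟨Nat.prime_three⟩
  have e2 : Subgroup.zpowers q ≃* Multiplicative (ZMod 3) :=
    mulEquivOfPrimeCardEq (p := 3) (by rw [Nat.card_zpowers, hq]) (by simp)
  let f : P × Subgroup.zpowers q →* G := P.subtype.coprod (Subgroup.zpowers q).subtype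
  have hf : Function.Injective f := by
    rw [injective_iff_map_eq_one]
    rintro ⟨a, b⟩ hab
    have h1 : (a : G) * b = 1 := hab
    have h2 : (a : G) = (b : G)⁻¹ := eq_inv_of_mul_eq_one_left h1
    have ha : orderOf (a : G) ∣ 2 := orderOf_dvd_of_pow_eq_one (by rw [pow_two]; exact hsq a a.2)
    have hb : orderOf (a : G) ∣ 3 := by
      rw [h2, orderOf_inv, ← hq, ← Nat.card_zpowers q]
      exact Subgroup.orderOf_dvd_natCard _ b.2
    have h3 : orderOf (a : G) ∣ 1 := by
      have := Nat.dvd_gcd ha hb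
      simpa using this
    have h4 : (a : G) = 1 := orderOf_eq_one_iff.1 (Nat.dvd_one.1 h3)
    have h5 : (b : G) = 1 := by rw [h4, one_mul] at h1; exact h1
    exact Prod.ext (Subtype.ext h4) (Subtype.ext h5)
  have hbij : Function.Bijective f := by
    rw [Nat.bijective_iff_injective_and_card]
    refine ⟨hf, ?_⟩
    rw [Nat.card_prod, hP, Nat.card_zpowers, hq, h48]
  exact ⟨((MulEquiv.ofBijective f hbij).symm.trans (e1.prodCongr e2)).trans
    (MulEquiv.prodMultiplicative V4 (ZMod 3)).symm⟩

end Forward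

lemma model_iso : Nonempty (W ≃+ (ZMod 6 × ZMod 2 × ZMod 2 × ZMod 2)) := by
  let c : ZMod 6 ≃+ ZMod 2 × ZMod 3 :=
    (ZMod.chineseRemainder (m := 2) (n := 3) (by norm_num)).toAddEquiv
  refine ⟨AddEquiv.symm
    { toFun := fun p => (((c p.1).1, p.2.1, p.2.2.1, p.2.2.2), (c p.1).2)
      invFun := fun w => (c.symm (w.1.1, w.2), w.1.2.1, w.1.2.2.1, w.1.2.2.2)
      left_inv := ?_
      right_inv := ?_
      map_add' := ?_ }⟩
  · rintro ⟨a, b, c', d⟩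
    simp
  · rintro ⟨⟨a, b, c', d⟩, t⟩
    simp
  · rintro ⟨a, b, c', d⟩ ⟨a2, b2, c2, d2⟩
    simp

/-- A group of order 48 is a CI-group iff it is isomorphic to `C₆ × C₂ × C₂ × C₂`. -/
theorem ci_group_order_48 (G : Type*) [Group G] [Finite G] (h48 : Nat.card G = 48) :
    IsCIGroup G ↔
      Nonempty (G ≃* Multiplicative (ZMod 6 × ZMod 2 × ZMod 2 × ZMod 2)) := by
  obtain ⟨m⟩ := model_iso
  constructor
  · intro hG
    obtain ⟨P, q, hP, hsq, hq, hc⟩ := ci_struct h48 hG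
    obtain ⟨e⟩ := struct_model h48 hP hsq hq hc
    exact ⟨e.trans (AddEquiv.toMultiplicative m)⟩
  · rintro ⟨e⟩
    exact ci_of_equiv_model (e.trans (AddEquiv.toMultiplicative m).symm)
end

section
/- There exists a transitive subgroup G of the symmetric group S_8 with d(G) = 4; in particular, since ⌊(√3/2)·8/√(log₂ 8)⌋ = 4, the bound d(G) ≤ ⌊(√3/2)·n/√(log₂ n)⌋ for transitive subgroups of S_n is attained with equality at n = 8. -/
/-- `minGen G` is the minimal size of a generating set of the group `G` (denoted `d(G)`). -/
noncomputable def minGen (G : Type*) [Group G] : ℕ :=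
  sInf {n | ∃ S : Finset G, S.card = n ∧ Subgroup.closure (S : Set G) = ⊤}

/-- A subgroup of `Sym(Fin m)` is transitive if its natural action on the `m` points is
transitive. -/
def IsTransitiveSub {m : ℕ} (H : Subgroup (Equiv.Perm (Fin m))) : Prop :=
  ∀ x y : Fin m, ∃ g ∈ H, g x = y

/-- The extraspecial group of order 32 (Heisenberg-type coordinates over `ZMod 2`). -/
@[ext] structure ESGroup where
  c : ZMod 2
  d : ZMod 2
  p : ZMod 2
  q : ZMod 2
  z : ZMod 2

namespace ESGroup

instance : Mul ESGroup :=
  ⟨fun x y => ⟨x.c + y.c, x.d + y.d, x.p + y.p, x.q + y.q, x.z + y.z + x.c * y.p + x.d * y.q⟩⟩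

instance : One ESGroup := ⟨⟨0, 0, 0, 0, 0⟩⟩

instance : Inv ESGroup :=
  ⟨fun x => ⟨-x.c, -x.d, -x.p, -x.q, -x.z + x.c * x.p + x.d * x.q⟩⟩

theorem mul_def (x y : ESGroup) : x * y =
    ⟨x.c + y.c, x.d + y.d, x.p + y.p, x.q + y.q, x.z + y.z + x.c * y.p + x.d * y.q⟩ := rfl

theorem one_def : (1 : ESGroup) = ⟨0, 0, 0, 0, 0⟩ := rfl

theorem inv_def (x : ESGroup) :
    x⁻¹ = ⟨-x.c, -x.d, -x.p, -x.q, -x.z + x.c * x.p + x.d * x.q⟩ := rfl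

instance : Group ESGroup :=
  Group.ofLeftAxioms
    (by intro x y w; simp only [mul_def, mk.injEq]; refine ⟨?_, ?_, ?_, ?_, ?_⟩ <;> ring)
    (by intro x; simp [mul_def, one_def])
    (by
      intro x
      simp only [mul_def, one_def, inv_def, mk.injEq]
      refine ⟨?_, ?_, ?_, ?_, ?_⟩ <;> ring)

/-- The eight points. -/
abbrev Pts := ZMod 2 × ZMod 2 × ZMod 2

instance : MulAction ESGroup Pts where
  smul x t := (t.1 + x.z + x.c * t.2.1 + x.d * t.2.2, t.2.1 + x.p, t.2.2 + x.q)
  one_smul t := by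
    change (t.1 + 0 + 0 * t.2.1 + 0 * t.2.2, t.2.1 + 0, t.2.2 + 0) = t
    simp
  mul_smul x y t := by
    refine Prod.ext ?_ (Prod.ext ?_ ?_)
    · change t.1 + (x.z + y.z + x.c * y.p + x.d * y.q) + (x.c + y.c) * t.2.1
          + (x.d + y.d) * t.2.2 = (t.1 + y.z + y.c * t.2.1 + y.d * t.2.2) + x.z
          + x.c * (t.2.1 + y.p) + x.d * (t.2.2 + y.q)
      ring
    · change t.2.1 + (x.p + y.p) = t.2.1 + y.p + x.p
      ring
    · change t.2.2 + (x.q + y.q) = t.2.2 + y.q + x.q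
      ring

theorem smul_def (x : ESGroup) (t : Pts) :
    x • t = (t.1 + x.z + x.c * t.2.1 + x.d * t.2.2, t.2.1 + x.p, t.2.2 + x.q) := rfl

theorem toPerm_injective : Function.Injective (MulAction.toPermHom ESGroup Pts) := by
  intro x y h
  have H : ∀ t : Pts, x • t = y • t := fun t => congrArg (fun g : Equiv.Perm Pts => g t) h
  have h0 := H (0, 0, 0)
  have h1 := H (0, 1, 0)
  have h2 := H (0, 0, 1)
  simp only [smul_def, Prod.mk.injEq, mul_zero, mul_one, zero_add, add_zero] at h0 h1 h2
  obtain ⟨hz, hp, hq⟩ := h0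
  have hc : x.c = y.c := by have := h1.1; rw [hz] at this; exact add_left_cancel this
  have hd : x.d = y.d := by have := h2.1; rw [hz] at this; exact add_left_cancel this
  exact ESGroup.ext hc hd hp hq hz

/-- A numbering of the points. -/
noncomputable def num : Pts ≃ Fin 8 := Fintype.equivFinOfCardEq (by simp [Pts, ZMod.card])

/-- The faithful permutation representation of degree 8. -/
noncomputable def rep : ESGroup →* Equiv.Perm (Fin 8) :=
  (num.permCongrHom).toMonoidHom.comp (MulAction.toPermHom ESGroup Pts)

theorem rep_injective : Function.Injective rep :=
  (num.permCongrHom).injective.comp toPerm_injective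

theorem rep_apply (x : ESGroup) (i : Fin 8) : rep x i = num (x • num.symm i) := rfl

theorem rep_transitive : IsTransitiveSub rep.range := by
  intro i j
  refine ⟨rep ⟨0, 0, (num.symm j).2.1 - (num.symm i).2.1, (num.symm j).2.2 - (num.symm i).2.2,
    (num.symm j).1 - (num.symm i).1⟩, ⟨_, rfl⟩, ?_⟩
  rw [rep_apply, ← Equiv.eq_symm_apply, smul_def]
  refine Prod.ext ?_ (Prod.ext ?_ ?_) <;> simp

/-- The quotient map onto the elementary abelian group of rank 4. -/
def quo (x : ESGroup) : Fin 4 → ZMod 2 := ![x.c, x.d, x.p, x.q]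

theorem quo_mul (x y : ESGroup) : quo (x * y) = quo x + quo y := by
  ext i
  fin_cases i <;> rfl

theorem quo_one : quo 1 = 0 := by
  ext i
  fin_cases i <;> rfl

theorem quo_inv (x : ESGroup) : quo x⁻¹ = -quo x := by
  ext i
  fin_cases i <;> rfl

theorem four_le_card (S : Finset ESGroup) (hS : Subgroup.closure (S : Set ESGroup) = ⊤) :
    4 ≤ S.card := by
  classical
  set W := Submodule.span (ZMod 2) ((S.image quo : Finset (Fin 4 → ZMod 2)) : Set (Fin 4 → ZMod 2)) with hW
  have key : ∀ x : ESGroup, quo x ∈ W := by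
    intro x
    have hx : x ∈ Subgroup.closure (S : Set ESGroup) := hS ▸ Subgroup.mem_top x
    induction hx using Subgroup.closure_induction with
    | mem x hx => exact Submodule.subset_span (by simpa using ⟨x, hx, rfl⟩)
    | one => rw [quo_one]; exact W.zero_mem
    | mul x y _ _ hx hy => rw [quo_mul]; exact W.add_mem hx hy
    | inv x _ hx => rw [quo_inv]; exact W.neg_mem hx
  have htop : W = ⊤ := by
    rw [eq_top_iff]
    intro v _
    have : quo ⟨v 0, v 1, v 2, v 3, 0⟩ = v := by
      ext i
      fin_cases i <;> rfl
    rw [← this]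
    exact key _
  have h1 : Module.finrank (ZMod 2) W ≤ (S.image quo).card := finrank_span_finset_le_card _
  rw [htop, finrank_top, Module.finrank_fin_fun] at h1
  exact h1.trans Finset.card_image_le

theorem exists_gen : ∃ S : Finset ESGroup, S.card ≤ 4 ∧
    Subgroup.closure (S : Set ESGroup) = ⊤ := by
  classical
  refine ⟨{⟨1, 0, 0, 0, 0⟩, ⟨0, 1, 0, 0, 0⟩, ⟨0, 0, 1, 0, 0⟩, ⟨0, 0, 0, 1, 0⟩},
    Finset.card_le_four, ?_⟩
  set K := Subgroup.closure ((({⟨1, 0, 0, 0, 0⟩, ⟨0, 1, 0, 0, 0⟩, ⟨0, 0, 1, 0, 0⟩,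
    ⟨0, 0, 0, 1, 0⟩} : Finset ESGroup)) : Set ESGroup) with hK
  have two : ∀ t : ZMod 2, t = 0 ∨ t = 1 := by decide
  have hc : ∀ t, (⟨t, 0, 0, 0, 0⟩ : ESGroup) ∈ K := by
    intro t
    rcases two t with rfl | rfl
    · exact K.one_mem
    · exact Subgroup.subset_closure (by simp)
  have hd : ∀ t, (⟨0, t, 0, 0, 0⟩ : ESGroup) ∈ K := by
    intro t
    rcases two t with rfl | rfl
    · exact K.one_mem
    · exact Subgroup.subset_closure (by simp)
  have hp : ∀ t, (⟨0, 0, t, 0, 0⟩ : ESGroup) ∈ K := by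
    intro t
    rcases two t with rfl | rfl
    · exact K.one_mem
    · exact Subgroup.subset_closure (by simp)
  have hq : ∀ t, (⟨0, 0, 0, t, 0⟩ : ESGroup) ∈ K := by
    intro t
    rcases two t with rfl | rfl
    · exact K.one_mem
    · exact Subgroup.subset_closure (by simp)
  have hz : ∀ t, (⟨0, 0, 0, 0, t⟩ : ESGroup) ∈ K := by
    intro t
    have h := K.mul_mem (K.mul_mem (hc 1) (hp t)) (K.mul_mem (hc (-1)) (hp (-t)))
    convert h using 1
    simp [mul_def, CharTwo.add_self_eq_zero]
  rw [eq_top_iff]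
  rintro ⟨c, d, p, q, z⟩ -
  have h := K.mul_mem (K.mul_mem (K.mul_mem (K.mul_mem (hp p) (hq q)) (hc c)) (hd d)) (hz z)
  convert h using 1
  simp [mul_def]

theorem minGen_range : minGen ↥rep.range = 4 := by
  classical
  let e : ESGroup ≃* rep.range := MonoidHom.ofInjective rep_injective
  have transfer : ∀ {A B : Type} [Group A] [Group B] (f : A ≃* B) (S : Finset A),
      Subgroup.closure (S : Set A) = ⊤ →
      Subgroup.closure ((S.map f.toEquiv.toEmbedding : Finset B) : Set B) = ⊤ := by
    intro A B _ _ f S hS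
    have h := MonoidHom.map_closure f.toMonoidHom (S : Set A)
    rw [hS, Subgroup.map_top_of_surjective _ f.surjective] at h
    rw [Finset.coe_map]
    exact h.symm
  obtain ⟨S, hS4, hS⟩ := exists_gen
  have hmem : (S.map e.toEquiv.toEmbedding).card ∈
      {n | ∃ S : Finset rep.range, S.card = n ∧ Subgroup.closure (S : Set rep.range) = ⊤} :=
    ⟨_, rfl, transfer e S hS⟩
  apply le_antisymm
  · refine (Nat.sInf_le hmem).trans ?_
    rwa [Finset.card_map]
  · refine le_csInf ⟨_, hmem⟩ ?_
    rintro n ⟨T, rfl, hT⟩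
    have h := four_le_card _ (transfer e.symm T hT)
    rwa [Finset.card_map] at h

end ESGroup

theorem floor_value :
    ⌊(Real.sqrt 3 / 2) * (8 : ℝ) / Real.sqrt (Real.logb 2 (8 : ℝ))⌋₊ = 4 := by
  have h8 : Real.logb 2 (8 : ℝ) = 3 := by
    rw [show (8 : ℝ) = 2 ^ (3 : ℝ) by norm_num]
    exact Real.logb_rpow (by norm_num) (by norm_num)
  have h3 : Real.sqrt 3 ≠ 0 := by positivity
  have : (Real.sqrt 3 / 2) * (8 : ℝ) / Real.sqrt 3 = (4 : ℕ) := by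
    field_simp
    norm_num
  rw [h8, this, Nat.floor_natCast]

/-- There is a transitive subgroup `G ≤ S₈` with `d(G) = 4`; since
`⌊(√3/2)·8/√(log₂ 8)⌋ = 4`, the general bound is attained with equality at `n = 8`. -/
theorem bound_attained_deg8 :
    (∃ G : Subgroup (Equiv.Perm (Fin 8)), IsTransitiveSub G ∧ minGen ↥G = 4) ∧
    ⌊(Real.sqrt 3 / 2) * (8 : ℝ) / Real.sqrt (Real.logb 2 (8 : ℝ))⌋₊ = 4 :=
  ⟨⟨ESGroup.rep.range, ESGroup.rep_transitive, ESGroup.minGen_range⟩, floor_value⟩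
end
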